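/- arXiv:1704.04288 — 13 statements merged into one kernel-verified Lean document; each statement's English description precedes it below -/
import Mathlib

section
/- A permutation π contains a separated pair if and only if π contains the pattern 231. -/
/-- `(v+1, v)` (0-based values) is a separated pair of `π`. -/
def IsSepPair {n : ℕ} (π : Equiv.Perm (Fin n)) (v : Fin n) : Prop :=
  ∃ p q r : Fin n, p < q ∧ q < r ∧
    (π p : ℕ) = (v : ℕ) + 1 ∧ (v : ℕ) + 1 < (π q : ℕ) ∧ π r = v

/-- `π` contains `σ` as a pattern. -/
def Contains {n k : ℕ} (π : Equiv.Perm (Fin n)) (σ : Equiv.Perm (Fin k)) : Prop :=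
  ∃ α : Fin k → Fin n, StrictMono α ∧ ∀ i j, π (α i) < π (α j) ↔ σ i < σ j

/-- the pattern 231 (one-line 2,3,1; 0-based values 1,2,0). -/
noncomputable def p231 : Equiv.Perm (Fin 3) :=
  Equiv.ofBijective (![1, 2, 0] : Fin 3 → Fin 3) (by decide)

/-!
Let `b c a` be an occurrence of `231` at positions `p < q < r`. Since `b` is smaller than the entry
at `q`, no value of the interval `[a, b]` stands at `q`, so each stands on the left or on the right
of `q`. Going up from `a`, which stands on the right, to `b`, which stands on the left, the first
value to stand on the left forms with its predecessor a separated pair around `q`.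
-/

/-- The map `f` has a separated pair: it takes values `v` at `p` and `u` at `r`, where `v` covers
`u`, and a value above `v` at some position between `p` and `r`. For permutations, covering means
that `v = u + 1`. -/
def HasSepPair {α β : Type*} [LT α] [LT β] (f : α → β) : Prop :=
  ∃ p q r, p < q ∧ q < r ∧ f r ⋖ f p ∧ f p < f q

/-- The map `f`, read as a word, contains the pattern `231`. -/
def Has231 {α β : Type*} [LT α] [LT β] (f : α → β) : Prop :=
  ∃ p q r, p < q ∧ q < r ∧ f r < f p ∧ f p < f q

theorem HasSepPair.has231 {α β : Type*} [LT α] [LT β] {f : α → β} (hf : HasSepPair f) :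
    Has231 f := by
  obtain ⟨p, q, r, hpq, hqr, hcov, hlt⟩ := hf
  exact ⟨p, q, r, hpq, hqr, hcov.lt, hlt⟩

theorem exists_covBy_le_of_Icc_subset_union {β : Type*} [PartialOrder β] [LocallyFiniteOrder β]
    {s t : Set β} {a b : β} (hab : a < b) (ha : a ∈ s) (hb : b ∈ t)
    (hst : Set.Icc a b ⊆ s ∪ t) : ∃ u ∈ s, ∃ v ∈ t, u ⋖ v ∧ v ≤ b := by
  obtain ⟨v, ⟨⟨hav, hvb⟩, hvt⟩, hmin⟩ :=
    ((Set.finite_Ioc a b).inter_of_left t).exists_minimal ⟨b, ⟨hab, le_rfl⟩, hb⟩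
  obtain ⟨u, hau, huv⟩ := exists_le_covBy_of_lt hav
  have hub : u ≤ b := huv.le.trans hvb
  refine ⟨u, ?_, v, hvt, huv, hvb⟩
  obtain rfl | hau' := hau.eq_or_lt
  · exact ha
  · have hut : u ∉ t := fun hut => huv.lt.not_ge (hmin ⟨⟨hau', hub⟩, hut⟩ huv.le)
    exact (hst ⟨hau, hub⟩).resolve_right hut

theorem Has231.hasSepPair {α β : Type*} [LinearOrder α] [PartialOrder β] [LocallyFiniteOrder β]
    {f : α → β} (h231 : Has231 f) (hf : (Set.range f).OrdConnected) : HasSepPair f := by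
  obtain ⟨p, q, r, hpq, hqr, hrp, hlt⟩ := h231
  have right_or_left : Set.Icc (f r) (f p) ⊆ f '' Set.Ioi q ∪ f '' Set.Iio q := by
    intro w hw
    obtain ⟨x, rfl⟩ := hf.out (Set.mem_range_self r) (Set.mem_range_self p) hw
    have hxq : x ≠ q := ne_of_apply_ne f (hw.2.trans_lt hlt).ne
    exact hxq.lt_or_gt.symm.imp (Set.mem_image_of_mem f) (Set.mem_image_of_mem f)
  obtain ⟨_, ⟨r', hqr', rfl⟩, _, ⟨p', hpq', rfl⟩, hcov, hle⟩ :=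
    exists_covBy_le_of_Icc_subset_union hrp (Set.mem_image_of_mem f hqr)
      (Set.mem_image_of_mem f hpq) right_or_left
  exact ⟨p', q, r', hpq', hqr', hcov, hle.trans_lt hlt⟩

theorem exists_isSepPair_iff_hasSepPair {n : ℕ} (π : Equiv.Perm (Fin n)) :
    (∃ v, IsSepPair π v) ↔ HasSepPair π := by
  constructor
  · rintro ⟨_, p, q, r, hpq, hqr, hp, hq, rfl⟩
    exact ⟨p, q, r, hpq, hqr, Fin.covBy_iff.2 (Nat.covBy_iff_add_one_eq.2 hp.symm),
      Fin.lt_def.2 (hp.trans_lt hq)⟩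
  · rintro ⟨p, q, r, hpq, hqr, hcov, hlt⟩
    have hp : (π r : ℕ) + 1 = π p := Nat.covBy_iff_add_one_eq.1 hcov.coe_fin
    exact ⟨π r, p, q, r, hpq, hqr, hp.symm, hp.trans_lt hlt, rfl⟩

theorem contains_p231_iff_has231 {n : ℕ} (π : Equiv.Perm (Fin n)) :
    Contains π p231 ↔ Has231 π := by
  constructor
  · rintro ⟨α, hα, h⟩
    exact ⟨α 0, α 1, α 2, hα (by decide), hα (by decide),
      (h 2 0).2 (show (0 : Fin 3) < 1 by decide), (h 0 1).2 (show (1 : Fin 3) < 2 by decide)⟩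
  · rintro ⟨p, q, r, hpq, hqr, hrp, hlt⟩
    have positions_strictMono : StrictMono ![p, q, r] := by simp [hpq, hqr]
    have values_strictMono : StrictMono ![π r, π p, π q] := by simp [hrp, hlt]
    have values_eq (i : Fin 3) : π (![p, q, r] i) = ![π r, π p, π q] (p231 i) := by
      fin_cases i <;> rfl
    refine ⟨![p, q, r], positions_strictMono, fun i j => ?_⟩
    rw [values_eq, values_eq, values_strictMono.lt_iff_lt]

theorem sep_pair_iff_contains_231_general {α β : Type*} [LinearOrder α] [PartialOrder β]
    [LocallyFiniteOrder β] {f : α → β} (hf : (Set.range f).OrdConnected) :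
    HasSepPair f ↔ Has231 f :=
  ⟨HasSepPair.has231, fun h231 => h231.hasSepPair hf⟩

/-- A permutation contains a separated pair iff it contains the pattern 231. -/
theorem sep_pair_iff_contains_231 {n : ℕ} (π : Equiv.Perm (Fin n)) :
    (∃ v : Fin n, IsSepPair π v) ↔ Contains π p231 := by
  rw [exists_isSepPair_iff_hasSepPair, contains_p231_iff_has231,
    sep_pair_iff_contains_231_general (π.surjective.range_eq ▸ Set.ordConnected_univ)]
end

section
/- If a permutation σ is contained as a pattern in a permutation τ, then the number of separated pairs of σ is at most the number of separated pairs of τ, i.e. sep(σ) ≤ sep(τ). -/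
/-- number of separated pairs of `π`. -/
noncomputable def sep {n : ℕ} (π : Equiv.Perm (Fin n)) : ℕ :=
  {v : Fin n | IsSepPair π v}.ncard

/-!
Think of a separated pair as an occurrence of the pattern 231 in which the values playing 2 and 1
are consecutive. Any occurrence of 231 contains a separated pair whose values lie between those of
its 1 and its 2: reading the values upwards from the 1 to the 2, one starts to the right of the 3
and ends to its left, so some two consecutive values lie on different sides of it.

A containment of `σ` in `τ` sends each separated pair of `σ` to an occurrence of 231 in `τ`. The
intervals of values spanned by the 1 and the 2 of these occurrences overlap at most in endpoints, so
the separated pairs of `τ` found inside them are distinct.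
-/

theorem exists_covBy_not_and {α : Type*} [PartialOrder α] [LocallyFiniteOrder α] {P : α → Prop}
    {a b : α} (hab : a ≤ b) (ha : ¬P a) (hb : P b) :
    ∃ c d, a ≤ c ∧ c ⋖ d ∧ d ≤ b ∧ ¬P c ∧ P d := by
  induction le_iff_reflTransGen_covBy.mp hab using Relation.ReflTransGen.head_induction_on with
  | refl => exact absurd hb ha
  | @head a c hac path ih =>
    have hcb : c ≤ b := le_iff_reflTransGen_covBy.mpr path
    by_cases hc : P c
    · exact ⟨a, c, le_rfl, hac, hcb, ha, hc⟩
    · obtain ⟨d, e, hcd, h⟩ := ih hcb hc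
      exact ⟨d, e, hac.le.trans hcd, h⟩

theorem isSepPair_iff_covBy {n : ℕ} {π : Equiv.Perm (Fin n)} {v : Fin n} :
    IsSepPair π v ↔ ∃ p q r, p < q ∧ q < r ∧ v ⋖ π p ∧ π p < π q ∧ π r = v := by
  refine exists₃_congr fun p q r => ?_
  rw [Fin.covBy_iff, Nat.covBy_iff_add_one_eq, Fin.lt_def (a := π p)]
  grind

theorem exists_isSepPair_mem_Ico {n : ℕ} {π : Equiv.Perm (Fin n)} {p q r : Fin n}
    (hpq : p < q) (hqr : q < r) (hπrp : π r < π p) (hπpq : π p < π q) :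
    ∃ v ∈ Set.Ico (π r) (π p), IsSepPair π v := by
  obtain ⟨v, w, hrv, hvw, hwp, hv, hw⟩ : ∃ v w, π r ≤ v ∧ v ⋖ w ∧ w ≤ π p ∧
      ¬π.symm v < q ∧ π.symm w < q :=
    exists_covBy_not_and hπrp.le (by simpa using hqr.le) (by simpa using hpq)
  have hvp : v < π p := hvw.lt.trans_le hwp
  have q_ne : q ≠ π.symm v := by
    rintro rfl
    exact hvp.not_gt (by simpa using hπpq)
  have hqv : q < π.symm v := (not_lt.mp hv).lt_of_ne q_ne
  exact ⟨v, ⟨hrv, hvp⟩, isSepPair_iff_covBy.mpr ⟨π.symm w, q, π.symm v, hw, hqv,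
    by simpa using hvw, by simpa using hwp.trans_lt hπpq, π.apply_symm_apply v⟩⟩

theorem Contains.exists_strictMono_apply_eq {n k : ℕ} {τ : Equiv.Perm (Fin n)}
    {σ : Equiv.Perm (Fin k)} (h : Contains τ σ) :
    ∃ α β : Fin k → Fin n, StrictMono α ∧ StrictMono β ∧ ∀ i, τ (α i) = β (σ i) := by
  obtain ⟨α, hα, h⟩ := h
  exact ⟨α, fun v => τ (α (σ.symm v)), hα, fun u v huv => by simpa [h] using huv, by simp⟩

theorem IsSepPair.exists_isSepPair_of_strictMono {n k : ℕ} {τ : Equiv.Perm (Fin n)}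
    {σ : Equiv.Perm (Fin k)} {α β : Fin k → Fin n} (hα : StrictMono α) (hβ : StrictMono β)
    (h : ∀ i, τ (α i) = β (σ i)) {v : Fin k} (hv : IsSepPair σ v) :
    ∃ w, IsSepPair τ w ∧ β v ≤ w ∧ ∀ u, v < u → w < β u := by
  obtain ⟨p, q, r, hpq, hqr, hvp, hπpq, rfl⟩ := isSepPair_iff_covBy.mp hv
  obtain ⟨w, ⟨hrw, hwp⟩, hw⟩ : ∃ w ∈ Set.Ico (τ (α r)) (τ (α p)), IsSepPair τ w :=
    exists_isSepPair_mem_Ico (hα hpq) (hα hqr) (by simpa only [h] using hβ hvp.lt)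
      (by simpa only [h] using hβ hπpq)
  rw [h] at hrw hwp
  exact ⟨w, hw, hrw, fun u hu => hwp.trans_le (hβ.monotone (hvp.ge_of_gt hu))⟩

/-- If `σ` is contained in `τ` then `sep σ ≤ sep τ`. -/
theorem sep_le_of_contains {n k : ℕ} (τ : Equiv.Perm (Fin n)) (σ : Equiv.Perm (Fin k))
    (h : Contains τ σ) : sep σ ≤ sep τ := by
  obtain ⟨α, β, hα, hβ, h⟩ := h.exists_strictMono_apply_eq
  have lift_pair (v : {v // IsSepPair σ v}) :
      ∃ w : {w // IsSepPair τ w}, β v ≤ w ∧ ∀ u : Fin k, v < u → w < β u := by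
    obtain ⟨w, hw, w_bounds⟩ := v.2.exists_isSepPair_of_strictMono hα hβ h
    exact ⟨⟨w, hw⟩, w_bounds⟩
  choose f le_f f_lt using lift_pair
  have hf : StrictMono f := fun v v' hvv' => (f_lt v v' hvv').trans_le (le_f v')
  simpa only [sep, ← Nat.card_coe_set_eq, Set.coe_ofPred] using
    Nat.card_le_card_of_injective f hf.injective
end

section
/- A permutation π has at most one separated pair (equivalently, π is 2-pass sortable) if and only if π avoids all eleven patterns 24153, 24513, 24531, 34251, 35241, 42513, 42531, 45231, 261453, 231564 and 523164. -/
/- The eleven basis patterns, in one-line notation (0-based values). -/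
noncomputable def p24153 : Equiv.Perm (Fin 5) :=
  Equiv.ofBijective (![1, 3, 0, 4, 2] : Fin 5 → Fin 5) (by decide)
noncomputable def p24513 : Equiv.Perm (Fin 5) :=
  Equiv.ofBijective (![1, 3, 4, 0, 2] : Fin 5 → Fin 5) (by decide)
noncomputable def p24531 : Equiv.Perm (Fin 5) :=
  Equiv.ofBijective (![1, 3, 4, 2, 0] : Fin 5 → Fin 5) (by decide)
noncomputable def p34251 : Equiv.Perm (Fin 5) :=
  Equiv.ofBijective (![2, 3, 1, 4, 0] : Fin 5 → Fin 5) (by decide)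
noncomputable def p35241 : Equiv.Perm (Fin 5) :=
  Equiv.ofBijective (![2, 4, 1, 3, 0] : Fin 5 → Fin 5) (by decide)
noncomputable def p42513 : Equiv.Perm (Fin 5) :=
  Equiv.ofBijective (![3, 1, 4, 0, 2] : Fin 5 → Fin 5) (by decide)
noncomputable def p42531 : Equiv.Perm (Fin 5) :=
  Equiv.ofBijective (![3, 1, 4, 2, 0] : Fin 5 → Fin 5) (by decide)
noncomputable def p45231 : Equiv.Perm (Fin 5) :=
  Equiv.ofBijective (![3, 4, 1, 2, 0] : Fin 5 → Fin 5) (by decide)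
noncomputable def p261453 : Equiv.Perm (Fin 6) :=
  Equiv.ofBijective (![1, 5, 0, 3, 4, 2] : Fin 6 → Fin 6) (by decide)
noncomputable def p231564 : Equiv.Perm (Fin 6) :=
  Equiv.ofBijective (![1, 2, 0, 4, 5, 3] : Fin 6 → Fin 6) (by decide)
noncomputable def p523164 : Equiv.Perm (Fin 6) :=
  Equiv.ofBijective (![4, 1, 2, 0, 5, 3] : Fin 6 → Fin 6) (by decide)

/-!
A separated pair is an occurrence of 231 whose outer values are consecutive. Conversely, every
occurrence of 231 with outer values `u > v` forces a separated pair with values in `[v, u]`, because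
on the way up from `v` to `u` some step jumps across the middle entry. Hence `sep` is monotone under
pattern containment, and each of the eleven patterns already has two separated pairs.

For the other direction take two separated pairs and the six (or, if the pairs share a value, five)
entries witnessing them. According to how the two occurrences of 231 interleave, at least one of the
eleven patterns can be read off; that the upper pair has consecutive values is what keeps the middle
entry of the lower one from lying between them.
-/

variable {n k : ℕ} {π : Equiv.Perm (Fin n)} {σ : Equiv.Perm (Fin k)}

/-- The entries of `π` at the positions `p < q < r` form an occurrence of the pattern 231. -/
structure Is231At (π : Equiv.Perm (Fin n)) (p q r : Fin n) : Prop where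
  left_lt_mid : p < q
  mid_lt_right : q < r
  apply_right_lt_left : π r < π p
  apply_left_lt_mid : π p < π q

theorem isSepPair_iff_exists_is231At {v : Fin n} :
    IsSepPair π v ↔ ∃ p q r, Is231At π p q r ∧ π r ⋖ π p ∧ π r = v := by
  constructor
  · rintro ⟨p, q, r, hpq, hqr, hp, hq, rfl⟩
    have hcov : π r ⋖ π p := Fin.covBy_iff.2 (Nat.covBy_iff_add_one_eq.2 hp.symm)
    exact ⟨p, q, r, ⟨hpq, hqr, hcov.lt, by omega⟩, hcov, rfl⟩
  · rintro ⟨p, q, r, h, hcov, rfl⟩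
    have hp : (π r : ℕ) + 1 = π p := Nat.covBy_iff_add_one_eq.1 (Fin.covBy_iff.1 hcov)
    exact ⟨p, q, r, h.left_lt_mid, h.mid_lt_right, hp.symm, hp ▸ h.apply_left_lt_mid, rfl⟩

-- The largest value below `π p` that lies to the right of `q` has its successor to the left of `q`.
theorem Is231At.exists_isSepPair {p q r : Fin n} (h : Is231At π p q r) :
    ∃ v, IsSepPair π v ∧ π r ≤ v ∧ v < π p := by
  let S : Set (Fin n) := {v | v < π p ∧ q < π.symm v}
  have hr : π r ∈ S := ⟨h.apply_right_lt_left, by simpa using h.mid_lt_right⟩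
  obtain ⟨v, hrv, ⟨hvp, hqv⟩, hmax⟩ := S.toFinite.exists_le_maximal hr
  obtain ⟨w, hvw, hwp⟩ := exists_covBy_le_of_lt hvp
  have hwS : w ∉ S := fun hw => hvw.lt.not_ge (hmax hw hvw.le)
  have hwq : π.symm w < q := by
    rcases hwp.eq_or_lt with rfl | hwp'
    · simpa using h.left_lt_mid
    · refine lt_of_le_of_ne (not_lt.1 fun hq => hwS ⟨hwp', hq⟩) ?_
      rintro rfl
      exact (hwp.trans_lt h.apply_left_lt_mid).ne (π.apply_symm_apply w).symm
  refine ⟨v, isSepPair_iff_exists_is231At.2 ⟨π.symm w, q, π.symm v, ?_, ?_, ?_⟩, hrv, hvp⟩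
  · exact ⟨hwq, hqv, by simpa using hvw.lt, by simpa using hwp.trans_lt h.apply_left_lt_mid⟩
  · simpa using hvw
  · exact π.apply_symm_apply v

theorem one_lt_sep_iff :
    1 < sep π ↔ ∃ v w, v < w ∧ IsSepPair π v ∧ IsSepPair π w := by
  rw [sep, Set.one_lt_ncard]
  constructor
  · rintro ⟨v, hv, w, hw, hvw⟩
    rcases hvw.lt_or_gt with h | h
    · exact ⟨v, w, h, hv, hw⟩
    · exact ⟨w, v, h, hw, hv⟩
  · rintro ⟨v, w, h, hv, hw⟩
    exact ⟨v, hv, w, hw, h.ne⟩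

-- `β` lists the positions of an occurrence of `σ` by increasing value, `β ∘ σ` from left to right.
theorem contains_iff_exists_strictMono :
    Contains π σ ↔ ∃ β : Fin k → Fin n, StrictMono (π ∘ β) ∧ StrictMono (β ∘ σ) := by
  constructor
  · rintro ⟨α, hα, h⟩
    refine ⟨α ∘ σ.symm, fun i j hij => (h _ _).2 (by simpa using hij), ?_⟩
    simpa [Function.comp_assoc] using hα
  · rintro ⟨β, hπ, hσ⟩
    exact ⟨β ∘ σ, hσ, fun i j => hπ.lt_iff_lt⟩

-- The separated pairs of `σ` become occurrences of 231 in `π` with pairwise disjoint value ranges.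
theorem Contains.sep_le (h : Contains π σ) : sep σ ≤ sep π := by
  obtain ⟨β, hπ, hσ⟩ := contains_iff_exists_strictMono.1 h
  have exists_sep (v : {v // IsSepPair σ v}) :
      ∃ u : {u // IsSepPair π u}, π (β v) ≤ u ∧ ∀ w, (v : Fin k) < w → u < π (β w) := by
    obtain ⟨_, hv⟩ := v
    obtain ⟨p, q, r, h231, hcov, rfl⟩ := isSepPair_iff_exists_is231At.1 hv
    have h231' : Is231At π (β (σ p)) (β (σ q)) (β (σ r)) :=
      ⟨hσ h231.left_lt_mid, hσ h231.mid_lt_right, hπ hcov.lt, hπ h231.apply_left_lt_mid⟩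
    obtain ⟨u, hu, hru, hup⟩ := h231'.exists_isSepPair
    exact ⟨⟨u, hu⟩, hru, fun w hw => hup.trans_le (hπ.monotone (hcov.ge_of_gt hw))⟩
  choose f hle hlt using exists_sep
  have hf : StrictMono f := fun v w hvw => (hlt v w hvw).trans_le (hle w)
  exact Nat.card_le_card_of_injective f hf.injective

theorem strictMono_fin_five_iff {α : Type*} [Preorder α] {f : Fin 5 → α} :
    StrictMono f ↔ f 0 < f 1 ∧ f 1 < f 2 ∧ f 2 < f 3 ∧ f 3 < f 4 := by
  simp [Fin.strictMono_iff_lt_succ, Fin.forall_fin_succ]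

theorem strictMono_fin_six_iff {α : Type*} [Preorder α] {f : Fin 6 → α} :
    StrictMono f ↔ f 0 < f 1 ∧ f 1 < f 2 ∧ f 2 < f 3 ∧ f 3 < f 4 ∧ f 4 < f 5 := by
  simp [Fin.strictMono_iff_lt_succ, Fin.forall_fin_succ]

theorem contains_of_lt_five {σ : Equiv.Perm (Fin 5)} (β : Fin 5 → Fin n)
    (hval : π (β 0) < π (β 1) ∧ π (β 1) < π (β 2) ∧ π (β 2) < π (β 3) ∧ π (β 3) < π (β 4))
    (hpos : β (σ 0) < β (σ 1) ∧ β (σ 1) < β (σ 2) ∧ β (σ 2) < β (σ 3) ∧ β (σ 3) < β (σ 4)) :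
    Contains π σ :=
  contains_iff_exists_strictMono.2
    ⟨β, strictMono_fin_five_iff.2 hval, strictMono_fin_five_iff.2 hpos⟩

theorem contains_of_lt_six {σ : Equiv.Perm (Fin 6)} (β : Fin 6 → Fin n)
    (hval : π (β 0) < π (β 1) ∧ π (β 1) < π (β 2) ∧ π (β 2) < π (β 3) ∧ π (β 3) < π (β 4) ∧
      π (β 4) < π (β 5))
    (hpos : β (σ 0) < β (σ 1) ∧ β (σ 1) < β (σ 2) ∧ β (σ 2) < β (σ 3) ∧ β (σ 3) < β (σ 4) ∧
      β (σ 4) < β (σ 5)) :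
    Contains π σ :=
  contains_iff_exists_strictMono.2
    ⟨β, strictMono_fin_six_iff.2 hval, strictMono_fin_six_iff.2 hpos⟩

theorem lt_or_lt_of_covBy_of_injective {α β : Type*} [LinearOrder β] {f : α → β}
    (hf : f.Injective) {c d x : α} (h : f c ⋖ f d) (hc : x ≠ c) (hd : x ≠ d) :
    f x < f c ∨ f d < f x :=
  (lt_or_ge (f x) (f d)).imp (fun hx => (h.le_of_lt hx).lt_of_ne (hf.ne hc))
    fun hx => hx.lt_of_ne (hf.ne hd.symm)

namespace Is231At

/- Positions are named after the order of their values: the lower occurrence is `b x a`, the upper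
one `d y c`, with `π a < π b ≤ π c < π d`. The prefix `hπ` marks facts about values. -/
variable {a b c d x y : Fin n}

theorem contains_of_lower_right_lt_upper_left (hl : Is231At π b x a) (hu : Is231At π d y c)
    (hle : π b ≤ π c) (hcov : π c ⋖ π d) (had : a < d) :
    Contains π p231564 ∨ Contains π p24153 ∨ Contains π p261453 := by
  obtain ⟨hbx, hxa, hπab, hπbx⟩ := hl
  obtain ⟨hdy, hyc, hπcd, hπdy⟩ := hu
  have hπbc : π b < π c := hle.lt_of_ne (π.injective.ne (by order))
  rcases lt_or_lt_of_covBy_of_injective π.injective hcov (by order : x ≠ c)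
    (by order : x ≠ d) with hπxc | hπdx
  · exact .inl <| contains_of_lt_six ![a, b, x, c, d, y]
      ⟨hπab, hπbx, hπxc, hπcd, hπdy⟩ ⟨hbx, hxa, had, hdy, hyc⟩
  rcases lt_or_gt_of_ne (π.injective.ne (by order : x ≠ y)) with hπxy | hπyx
  · exact .inr <| .inl <| contains_of_lt_five ![a, b, c, x, y]
      ⟨hπab, hπbc, hπcd.trans hπdx, hπxy⟩ ⟨hbx, hxa, had.trans hdy, hyc⟩
  · exact .inr <| .inr <| contains_of_lt_six ![a, b, c, d, y, x]
      ⟨hπab, hπbc, hπcd, hπdy, hπyx⟩ ⟨hbx, hxa, had, hdy, hyc⟩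

theorem contains_of_upper_left_between (hl : Is231At π b x a) (hu : Is231At π d y c)
    (hle : π b ≤ π c) (hbd : b < d) (hda : d < a) :
    Contains π p24531 ∨ Contains π p24513 ∨ Contains π p24153 := by
  obtain ⟨-, -, hπab, -⟩ := hl
  obtain ⟨hdy, hyc, hπcd, hπdy⟩ := hu
  have hπbc : π b < π c := hle.lt_of_ne (π.injective.ne (by order))
  have hval : π a < π b ∧ π b < π c ∧ π c < π d ∧ π d < π y := ⟨hπab, hπbc, hπcd, hπdy⟩
  rcases lt_or_gt_of_ne (by rintro rfl; order : y ≠ a) with hya | hay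
  · rcases lt_or_gt_of_ne (by rintro rfl; order : c ≠ a) with hca | hac
    · exact .inl <| contains_of_lt_five ![a, b, c, d, y] hval ⟨hbd, hdy, hyc, hca⟩
    · exact .inr <| .inl <| contains_of_lt_five ![a, b, c, d, y] hval ⟨hbd, hdy, hya, hac⟩
  · exact .inr <| .inr <| contains_of_lt_five ![a, b, c, d, y] hval ⟨hbd, hda, hay, hyc⟩

theorem contains_of_lower_right_lt_upper_mid (hl : Is231At π b x a) (hu : Is231At π d y c)
    (hle : π b ≤ π c) (hcov : π c ⋖ π d) (hdb : d < b) (hay : a < y) :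
    Contains π p523164 ∨ Contains π p42513 := by
  obtain ⟨hbx, hxa, hπab, hπbx⟩ := hl
  obtain ⟨-, hyc, hπcd, hπdy⟩ := hu
  have hπbc : π b < π c := hle.lt_of_ne (π.injective.ne (by order))
  rcases lt_or_lt_of_covBy_of_injective π.injective hcov (by order : x ≠ c)
    (by order : x ≠ d) with hπxc | hπdx
  · exact .inl <| contains_of_lt_six ![a, b, x, c, d, y]
      ⟨hπab, hπbx, hπxc, hπcd, hπdy⟩ ⟨hdb, hbx, hxa, hay, hyc⟩
  · exact .inr <| contains_of_lt_five ![a, b, c, d, x]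
      ⟨hπab, hπbc, hπcd, hπdx⟩ ⟨hdb, hbx, hxa, hay.trans hyc⟩

theorem contains_of_upper_mid_between (hl : Is231At π b x a) (hu : Is231At π d y c)
    (hle : π b ≤ π c) (hdb : d < b) (hby : b < y) (hya : y < a) :
    Contains π p42531 ∨ Contains π p42513 := by
  obtain ⟨-, -, hπab, -⟩ := hl
  obtain ⟨-, hyc, hπcd, hπdy⟩ := hu
  have hπbc : π b < π c := hle.lt_of_ne (π.injective.ne (by order))
  have hval : π a < π b ∧ π b < π c ∧ π c < π d ∧ π d < π y := ⟨hπab, hπbc, hπcd, hπdy⟩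
  rcases lt_or_gt_of_ne (by rintro rfl; order : c ≠ a) with hca | hac
  · exact .inl <| contains_of_lt_five ![a, b, c, d, y] hval ⟨hdb, hby, hyc, hca⟩
  · exact .inr <| contains_of_lt_five ![a, b, c, d, y] hval ⟨hdb, hby, hya, hac⟩

theorem contains_of_upper_right_le_lower_left (hl : Is231At π b x a) (hu : Is231At π d y c)
    (hle : π b ≤ π c) (hcov : π c ⋖ π d) (hcb : c ≤ b) :
    Contains π p45231 ∨ Contains π p35241 ∨ Contains π p34251 := by
  obtain ⟨hbx, hxa, hπab, hπbx⟩ := hl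
  obtain ⟨hdy, hyc, hπcd, hπdy⟩ := hu
  rcases lt_or_lt_of_covBy_of_injective π.injective hcov (by order : x ≠ c)
    (by order : x ≠ d) with hπxc | hπdx
  · exact .inl <| contains_of_lt_five ![a, b, x, d, y]
      ⟨hπab, hπbx, hπxc.trans hπcd, hπdy⟩ ⟨hdy, hyc.trans_le hcb, hbx, hxa⟩
  have hπac : π a < π c := hπab.trans_le hle
  have hcx : c < x := hcb.trans_lt hbx
  rcases lt_or_gt_of_ne (π.injective.ne (by order : x ≠ y)) with hπxy | hπyx
  · exact .inr <| .inl <| contains_of_lt_five ![a, c, d, x, y]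
      ⟨hπac, hπcd, hπdx, hπxy⟩ ⟨hdy, hyc, hcx, hxa⟩
  · exact .inr <| .inr <| contains_of_lt_five ![a, c, d, y, x]
      ⟨hπac, hπcd, hπdy, hπyx⟩ ⟨hdy, hyc, hcx, hxa⟩

theorem contains_of_lower_left_between (hl : Is231At π b x a) (hu : Is231At π d y c)
    (hle : π b ≤ π c) (hcov : π c ⋖ π d) (hyb : y < b) (hbc : b < c) :
    Contains π p45231 ∨ Contains π p42513 := by
  obtain ⟨hbx, hxa, hπab, hπbx⟩ := hl
  obtain ⟨hdy, -, hπcd, hπdy⟩ := hu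
  have hπbc : π b < π c := hle.lt_of_ne (π.injective.ne hbc.ne)
  rcases lt_or_gt_of_ne (by rintro rfl; order : c ≠ a) with hca | hac
  · exact .inl <| contains_of_lt_five ![a, b, c, d, y]
      ⟨hπab, hπbc, hπcd, hπdy⟩ ⟨hdy, hyb, hbc, hca⟩
  rcases lt_or_lt_of_covBy_of_injective π.injective hcov (by order : x ≠ c)
    (by order : x ≠ d) with hπxc | hπdx
  · exact .inl <| contains_of_lt_five ![a, b, x, d, y]
      ⟨hπab, hπbx, hπxc.trans hπcd, hπdy⟩ ⟨hdy, hyb, hbx, hxa⟩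
  · exact .inr <| contains_of_lt_five ![a, b, c, d, x]
      ⟨hπab, hπbc, hπcd, hπdx⟩ ⟨hdy.trans hyb, hbx, hxa, hac⟩

theorem interleaving_cases (hl : Is231At π b x a) (hu : Is231At π d y c) (hle : π b ≤ π c) :
    a < d ∨ (b < d ∧ d < a) ∨ (d < b ∧ a < y) ∨ (d < b ∧ b < y ∧ y < a) ∨ c ≤ b ∨
      (y < b ∧ b < c) := by
  obtain ⟨-, -, hπab, -⟩ := hl
  obtain ⟨-, -, hπcd, hπdy⟩ := hu
  have hbd : b ≠ d := by rintro rfl; order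
  have had : a ≠ d := by rintro rfl; order
  have hby : b ≠ y := by rintro rfl; order
  have hay : a ≠ y := by rintro rfl; order
  grind

end Is231At

/-- `π` is 2-pass sortable (has at most one separated pair) iff it avoids the
eleven listed patterns. -/
theorem two_pass_sortable_iff {n : ℕ} (π : Equiv.Perm (Fin n)) :
    sep π ≤ 1 ↔
      ¬ Contains π p24153 ∧ ¬ Contains π p24513 ∧ ¬ Contains π p24531 ∧
      ¬ Contains π p34251 ∧ ¬ Contains π p35241 ∧ ¬ Contains π p42513 ∧
      ¬ Contains π p42531 ∧ ¬ Contains π p45231 ∧ ¬ Contains π p261453 ∧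
      ¬ Contains π p231564 ∧ ¬ Contains π p523164 := by
  constructor
  · intro h
    have avoids {k : ℕ} {σ : Equiv.Perm (Fin k)} (hσ : 1 < sep σ) : ¬ Contains π σ :=
      fun hc => (hσ.trans_le hc.sep_le).not_ge h
    refine ⟨?_, ?_, ?_, ?_, ?_, ?_, ?_, ?_, ?_, ?_, ?_⟩ <;>
      exact avoids (one_lt_sep_iff.2 (by unfold IsSepPair; decide))
  · intro havoids
    by_contra! h
    obtain ⟨v, w, hvw, hv, hw⟩ := one_lt_sep_iff.1 h
    obtain ⟨b, x, a, hl, hπab, rfl⟩ := isSepPair_iff_exists_is231At.1 hv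
    obtain ⟨d, y, c, hu, hπcd, rfl⟩ := isSepPair_iff_exists_is231At.1 hw
    have hle : π b ≤ π c := hπab.ge_of_gt hvw
    rcases hl.interleaving_cases hu hle with
      had | ⟨hbd, hda⟩ | ⟨hdb, hay⟩ | ⟨hdb, hby, hya⟩ | hcb | ⟨hyb, hbc⟩
    · have hcontains := hl.contains_of_lower_right_lt_upper_left hu hle hπcd had; tauto
    · have hcontains := hl.contains_of_upper_left_between hu hle hbd hda; tauto
    · have hcontains := hl.contains_of_lower_right_lt_upper_mid hu hle hπcd hdb hay; tauto
    · have hcontains := hl.contains_of_upper_mid_between hu hle hdb hby hya; tauto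
    · have hcontains := hl.contains_of_upper_right_le_lower_left hu hle hπcd hcb; tauto
    · have hcontains := hl.contains_of_lower_left_between hu hle hπcd hyb hbc; tauto
end

section
/- Fix an integer t ≥ 0. If σ is a permutation with sep(σ) > t such that every permutation of strictly smaller length contained in σ as a pattern has at most t separated pairs, then the length of σ is at most 3(t + 1). -/
/-!
A separated pair is witnessed by three positions, so `t + 1` separated pairs are witnessed inside a
set of at most `3 (t + 1)` positions. In the pattern of `σ` on these positions each of the chosen
pairs is again separated: its two values are both kept, and adjacent values stay adjacent when other
values are deleted.
-/

/-- `v` and its successor form a separated pair of `π` with all three witnessing positions in `s`.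
Restricting the witnesses to `s` records which positions must be kept to preserve the pair;
consecutive values are encoded by the covering relation, which pulls back along order embeddings. -/
def IsSepPairOn {n : ℕ} (π : Equiv.Perm (Fin n)) (s : Set (Fin n)) (v : Fin n) : Prop :=
  ∃ p ∈ s, ∃ q ∈ s, ∃ r ∈ s, p < q ∧ q < r ∧ v ⋖ π p ∧ π p < π q ∧ π r = v

section Patterns

variable {n k : ℕ} {σ : Equiv.Perm (Fin n)} {s u : Set (Fin n)} {v : Fin n}

theorem IsSepPairOn.mono (hsu : s ⊆ u) : IsSepPairOn σ s v → IsSepPairOn σ u v := by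
  rintro ⟨p, hp, q, hq, r, hr, h⟩
  exact ⟨p, hsu hp, q, hsu hq, r, hsu hr, h⟩

theorem isSepPairOn_univ : IsSepPairOn σ Set.univ v ↔ IsSepPair σ v := by
  have covBy_iff (a b : Fin n) : a ⋖ b ↔ (b : ℕ) = a + 1 := by
    rw [Fin.covBy_iff, Nat.covBy_iff_add_one_eq, eq_comm]
  simp only [IsSepPairOn, IsSepPair, Set.mem_univ, true_and, covBy_iff]
  constructor
  · rintro ⟨p, q, r, hpq, hqr, hp, hlt, hr⟩
    exact ⟨p, q, r, hpq, hqr, hp, hp ▸ hlt, hr⟩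
  · rintro ⟨p, q, r, hpq, hqr, hp, hlt, hr⟩
    exact ⟨p, q, r, hpq, hqr, hp, Fin.lt_def.2 (hp ▸ hlt), hr⟩

theorem IsSepPair.exists_finset_card_le_three (h : IsSepPair σ v) :
    ∃ S : Finset (Fin n), S.card ≤ 3 ∧ IsSepPairOn σ S v := by
  obtain ⟨p, -, q, -, r, -, h⟩ := isSepPairOn_univ.2 h
  exact ⟨{p, q, r}, Finset.card_le_three, p, by simp, q, by simp, r, by simp, h⟩

theorem exists_finset_card_le_forall_isSepPairOn (V : Finset (Fin n))
    (hV : ∀ v ∈ V, IsSepPair σ v) :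
    ∃ S : Finset (Fin n), S.card ≤ 3 * V.card ∧ ∀ v ∈ V, IsSepPairOn σ S v := by
  choose! T hT_card hT using fun v hv ↦ (hV v hv).exists_finset_card_le_three
  refine ⟨V.biUnion T, ?_, fun v hv ↦ (hT v hv).mono ?_⟩
  · rw [mul_comm]
    exact Finset.card_biUnion_le_card_mul V T 3 hT_card
  · exact Finset.coe_subset.2 (Finset.subset_biUnion_of_mem T hv)

theorem exists_orderEmbedding_comp_perm {β : Type*} [LinearOrder β] {g : Fin k → β}
    (hg : Function.Injective g) :
    ∃ (f : Fin k ↪o β) (ρ : Equiv.Perm (Fin k)), ∀ i, g i = f (ρ i) := by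
  have sorted_strictMono : StrictMono (g ∘ Tuple.sort g) :=
    (Tuple.monotone_sort g).strictMono_of_injective (hg.comp (Tuple.sort g).injective)
  exact ⟨.ofStrictMono _ sorted_strictMono, (Tuple.sort g)⁻¹, fun i ↦ by simp⟩

variable {ρ : Equiv.Perm (Fin k)} {α f : Fin k ↪o Fin n}

theorem contains_of_orderEmbedding (h : ∀ i, σ (α i) = f (ρ i)) : Contains σ ρ :=
  ⟨α, α.strictMono, fun i j ↦ by rw [h, h, f.lt_iff_lt]⟩

theorem IsSepPairOn.exists_isSepPair_of_orderEmbedding (h : ∀ i, σ (α i) = f (ρ i))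
    (hv : IsSepPairOn σ (Set.range α) v) : ∃ w, IsSepPair ρ w ∧ f w = v := by
  obtain ⟨_, ⟨p, rfl⟩, _, ⟨q, rfl⟩, _, ⟨r, rfl⟩, hpq, hqr, hcov, hlt, rfl⟩ := hv
  rw [h, h] at hcov hlt
  refine ⟨ρ r, isSepPairOn_univ.1 ?_, (h r).symm⟩
  exact ⟨p, trivial, q, trivial, r, trivial, α.lt_iff_lt.1 hpq, α.lt_iff_lt.1 hqr,
    hcov.of_image f, f.lt_iff_lt.1 hlt, rfl⟩

theorem ncard_isSepPairOn_range_le_sep (h : ∀ i, σ (α i) = f (ρ i)) :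
    {v | IsSepPairOn σ (Set.range α) v}.ncard ≤ sep ρ :=
  calc {v | IsSepPairOn σ (Set.range α) v}.ncard
    _ ≤ (f '' {w | IsSepPair ρ w}).ncard :=
      Set.ncard_le_ncard fun _ hv ↦ hv.exists_isSepPair_of_orderEmbedding h
    _ ≤ sep ρ := Set.ncard_image_le

theorem exists_contains_le_sep (σ : Equiv.Perm (Fin n)) {c : ℕ} (hc : c ≤ sep σ) :
    ∃ m ≤ 3 * c, ∃ ρ : Equiv.Perm (Fin m), Contains σ ρ ∧ c ≤ sep ρ := by
  obtain ⟨V, hV, rfl⟩ := Set.exists_subset_card_eq hc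
  lift V to Finset (Fin n) using V.toFinite
  obtain ⟨S, hS_card, hS⟩ := exists_finset_card_le_forall_isSepPairOn V fun v hv ↦ hV hv
  let α : Fin S.card ↪o Fin n := S.orderEmbOfFin rfl
  have range_α : Set.range α = S := S.range_orderEmbOfFin rfl
  obtain ⟨f, ρ, hρ⟩ := exists_orderEmbedding_comp_perm (σ.injective.comp α.injective)
  rw [← Set.ncard_coe_finset V] at hS_card
  refine ⟨S.card, hS_card, ρ, contains_of_orderEmbedding hρ, ?_⟩
  calc (V : Set (Fin n)).ncard
    _ ≤ {v | IsSepPairOn σ (Set.range α) v}.ncard :=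
      Set.ncard_le_ncard fun v hv ↦ range_α.symm ▸ hS v hv
    _ ≤ sep ρ := ncard_isSepPairOn_range_le_sep hρ

end Patterns

/-- A basis element for the class of permutations with at most `t` separated
pairs has length at most `3(t+1)`. -/
theorem basis_length_le (t : ℕ) {n : ℕ} (σ : Equiv.Perm (Fin n))
    (h1 : sep σ > t)
    (h2 : ∀ m : ℕ, m < n → ∀ ρ : Equiv.Perm (Fin m), Contains σ ρ → sep ρ ≤ t) :
    n ≤ 3 * (t + 1) := by
  by_contra! hn
  obtain ⟨m, hm, ρ, hρ, hsep⟩ := exists_contains_le_sep σ (Nat.succ_le_of_lt h1)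
  exact (h2 m (hm.trans_lt hn) ρ hρ).not_gt hsep
end

section
/- For every positive integer n there exists a permutation of length n with at least ⌊(n−1)/2⌋ separated pairs; that is, τ(n) ≥ ⌊(n−1)/2⌋. -/
/-- `tau n` is the maximum of `sep` over all permutations of length `n`. -/
noncomputable def tau (n : ℕ) : ℕ :=
  Finset.univ.sup fun π : Equiv.Perm (Fin n) => sep π

/-!
Let `S` be a set of values less than `n - 2` (0-based) with no two consecutive elements. Write
first the values outside `S` other than `n - 1`, then `n - 1`, then the values in `S`. For each
`v ∈ S`, the value `v + 1` precedes the larger value `n - 1`, which precedes `v`. Hence every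
element of `S` gives a separated pair, and the even numbers less than `n - 2` are such a set `S`.
-/

theorem sort_symm_lt_sort_symm {n : ℕ} {α : Type*} [LinearOrder α] {f : Fin n → α}
    {a b : Fin n} (h : f a < f b) : (Tuple.sort f).symm a < (Tuple.sort f).symm b :=
  (Tuple.monotone_sort f).reflect_lt (by simpa using h)

theorem isSepPair_sort_of_lt {n : ℕ} {α : Type*} [LinearOrder α] {f : Fin n → α}
    {v w u : Fin n} (hw : (w : ℕ) = v + 1) (hwu : w < u) (hfw : f w < f u) (hfv : f u < f v) :
    IsSepPair (Tuple.sort f) v :=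
  ⟨(Tuple.sort f).symm w, (Tuple.sort f).symm u, (Tuple.sort f).symm v,
    sort_symm_lt_sort_symm hfw, sort_symm_lt_sort_symm hfv,
    by simpa using hw, by simpa [← hw] using hwu, by simp⟩

theorem exists_perm_forall_isSepPair {n : ℕ} {S : Set ℕ} (hlt : ∀ v ∈ S, v + 2 < n)
    (hgap : ∀ v ∈ S, v + 1 ∉ S) :
    ∃ π : Equiv.Perm (Fin n), ∀ v : Fin n, (v : ℕ) ∈ S → IsSepPair π v := by
  classical
  let block (v : Fin n) : ℕ := if (v : ℕ) ∈ S then 2 else if (v : ℕ) = n - 1 then 1 else 0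
  refine ⟨Tuple.sort block, fun v hv => ?_⟩
  have hvn : (v : ℕ) + 2 < n := hlt v hv
  let next : Fin n := ⟨v + 1, by omega⟩
  let last : Fin n := ⟨n - 1, by omega⟩
  have hnext : block next = 0 := by
    simp only [block, next, if_neg (hgap v hv)]
    exact if_neg (by omega)
  have hlast : block last = 1 := by
    have hnot : n - 1 ∉ S := fun h => by have := hlt _ h; omega
    simp [block, last, hnot]
  have hself : block v = 2 := if_pos hv
  exact isSepPair_sort_of_lt (w := next) (u := last) rfl (Fin.mk_lt_mk.mpr (by omega))
    (by omega) (by omega)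

theorem sep_le_tau {n : ℕ} (π : Equiv.Perm (Fin n)) : sep π ≤ tau n :=
  Finset.le_sup (f := fun π : Equiv.Perm (Fin n) => sep π) (Finset.mem_univ π)

theorem card_le_tau_of_add_one_notMem {n : ℕ} {S : Finset ℕ} (hlt : ∀ v ∈ S, v + 2 < n)
    (hgap : ∀ v ∈ S, v + 1 ∉ S) : S.card ≤ tau n := by
  obtain ⟨π, hπ⟩ := exists_perm_forall_isSepPair (S := (S : Set ℕ)) hlt hgap
  let T : Finset (Fin n) := S.attachFin fun v hv => by have := hlt v hv; omega
  have hT : (T : Set (Fin n)) ⊆ {v | IsSepPair π v} := fun v hv =>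
    hπ v (Finset.mem_attachFin _ |>.mp hv)
  calc
    S.card = T.card := (Finset.card_attachFin _ _).symm
    _ = (T : Set (Fin n)).ncard := (Set.ncard_coe_finset T).symm
    _ ≤ sep π := Set.ncard_le_ncard hT
    _ ≤ tau n := sep_le_tau π

/-- For every positive `n`, some permutation of length `n` has at least
`⌊(n-1)/2⌋` separated pairs. -/
theorem tau_ge_half (n : ℕ) (hn : 1 ≤ n) : (n - 1) / 2 ≤ tau n := by
  let evens : Finset ℕ := (Finset.range ((n - 1) / 2)).image (2 * ·)
  have hcard : evens.card = (n - 1) / 2 := by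
    rw [Finset.card_image_of_injective _ (mul_right_injective₀ two_ne_zero), Finset.card_range]
  have hlt : ∀ v ∈ evens, v + 2 < n := by
    simp only [evens, Finset.forall_mem_image, Finset.mem_range]
    omega
  have hgap : ∀ v ∈ evens, v + 1 ∉ evens := by
    simp only [evens, Finset.mem_image]
    omega
  exact hcard.ge.trans (card_le_tau_of_add_one_notMem hlt hgap)
end

section
/- For every integer k ≥ 1, the maximum number of separated pairs among permutations of length 2k satisfies τ(2k) ≥ k − 1 + τ(k). -/
theorem exists_sep_eq_tau (n : ℕ) : ∃ π : Equiv.Perm (Fin n), sep π = tau n := by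
  obtain ⟨π, -, hπ⟩ := Finset.exists_mem_eq_sup Finset.univ Finset.univ_nonempty
    fun π : Equiv.Perm (Fin n) => sep π
  exact ⟨π, hπ.symm⟩

section Interleave

variable {m k : ℕ}

theorem finProdFinEquiv_lt_of_fst_lt {b c : Fin m} (hbc : b < c) (v w : Fin k) :
    finProdFinEquiv (b, v) < finProdFinEquiv (c, w) := by
  rw [Fin.lt_def, finProdFinEquiv_apply_val, finProdFinEquiv_apply_val]
  calc (v : ℕ) + k * b < k + k * b := by gcongr; exact v.isLt
    _ = k * (b + 1) := by ring
    _ ≤ k * c := by gcongr; exact hbc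
    _ ≤ w + k * c := Nat.le_add_left _ _

/-- The column-by-column enumeration of the entries `(row, column)` of an `m × k` array, used
for the positions of a permutation; `finProdFinEquiv`, used for its values, goes row by row. -/
def colMajorEquiv (m k : ℕ) : Fin m × Fin k ≃ Fin (m * k) :=
  (Equiv.prodComm _ _).trans (finProdFinEquiv.trans (finCongr (mul_comm k m)))

theorem colMajorEquiv_lt_of_col_lt (b c : Fin m) {i j : Fin k} (hij : i < j) :
    colMajorEquiv m k (b, i) < colMajorEquiv m k (c, j) :=
  finProdFinEquiv_lt_of_fst_lt hij b c

theorem colMajorEquiv_lt_of_row_lt {b c : Fin m} (hbc : b < c) (i : Fin k) :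
    colMajorEquiv m k (b, i) < colMajorEquiv m k (c, i) :=
  Nat.add_lt_add_right hbc _

/-- The permutation obtained by reading column by column the `m × k` array whose `b`-th row is
the permutation `ρ b` with its values shifted up by `k * b`, so that a later row provides larger
values between the entries of an earlier one. -/
def interleave (ρ : Fin m → Equiv.Perm (Fin k)) : Equiv.Perm (Fin (m * k)) :=
  (colMajorEquiv m k).symm.trans ((Equiv.prodShear (Equiv.refl _) ρ).trans finProdFinEquiv)

theorem interleave_colMajorEquiv (ρ : Fin m → Equiv.Perm (Fin k)) (b : Fin m) (i : Fin k) :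
    interleave ρ (colMajorEquiv m k (b, i)) = finProdFinEquiv (b, ρ b i) := by
  simp [interleave]

theorem val_interleave_colMajorEquiv (ρ : Fin m → Equiv.Perm (Fin k)) (b : Fin m) (i : Fin k) :
    (interleave ρ (colMajorEquiv m k (b, i)) : ℕ) = ρ b i + k * b := by
  rw [interleave_colMajorEquiv, finProdFinEquiv_apply_val]

theorem interleave_lt_of_row_lt (ρ : Fin m → Equiv.Perm (Fin k)) {b c : Fin m} (hbc : b < c)
    (i j : Fin k) :
    interleave ρ (colMajorEquiv m k (b, i)) < interleave ρ (colMajorEquiv m k (c, j)) := by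
  simpa only [interleave_colMajorEquiv] using finProdFinEquiv_lt_of_fst_lt hbc (ρ b i) (ρ c j)

theorem IsSepPair.interleave {ρ : Fin m → Equiv.Perm (Fin k)} {b : Fin m} {v : Fin k}
    (h : IsSepPair (ρ b) v) : IsSepPair (interleave ρ) (finProdFinEquiv (b, v)) := by
  obtain ⟨p, q, r, hpq, hqr, hp, hq, rfl⟩ := h
  refine ⟨colMajorEquiv m k (b, p), colMajorEquiv m k (b, q), colMajorEquiv m k (b, r),
    colMajorEquiv_lt_of_col_lt b b hpq, colMajorEquiv_lt_of_col_lt b b hqr, ?_, ?_,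
    interleave_colMajorEquiv ρ b r⟩
  · rw [val_interleave_colMajorEquiv, finProdFinEquiv_apply_val, hp, Nat.add_right_comm]
  · rw [val_interleave_colMajorEquiv, finProdFinEquiv_apply_val, Nat.add_right_comm]
    exact Nat.add_lt_add_right hq _

theorem isSepPair_interleave_of_row_lt (ρ : Fin m → Equiv.Perm (Fin k)) {b c : Fin m}
    (hbc : b < c) {p r : Fin k} (hpr : p < r) (h : (ρ b p : ℕ) = ρ b r + 1) :
    IsSepPair (interleave ρ) (finProdFinEquiv (b, ρ b r)) := by
  have hp : (interleave ρ (colMajorEquiv m k (b, p)) : ℕ) =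
      (finProdFinEquiv (b, ρ b r) : ℕ) + 1 := by
    rw [val_interleave_colMajorEquiv, finProdFinEquiv_apply_val, h, Nat.add_right_comm]
  exact ⟨colMajorEquiv m k (b, p), colMajorEquiv m k (c, p), colMajorEquiv m k (b, r),
    colMajorEquiv_lt_of_row_lt hbc p, colMajorEquiv_lt_of_col_lt c b hpr, hp,
    hp ▸ interleave_lt_of_row_lt ρ hbc p p, interleave_colMajorEquiv ρ b r⟩

theorem isSepPair_interleave_of_eq_revPerm {ρ : Fin m → Equiv.Perm (Fin (k + 1))} {b c : Fin m}
    (hbc : b < c) (hb : ρ b = Fin.revPerm) (v : Fin k) :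
    IsSepPair (interleave ρ) (finProdFinEquiv (b, v.castSucc)) := by
  have h := isSepPair_interleave_of_row_lt ρ hbc (Fin.rev_lt_rev.mpr v.castSucc_lt_succ)
    (by simp [hb])
  simpa only [hb, Fin.revPerm_apply, Fin.rev_rev] using h

theorem sep_eq_sum_ncard (π : Equiv.Perm (Fin (m * k))) :
    sep π = ∑ b : Fin m, {v : Fin k | IsSepPair π (finProdFinEquiv (b, v))}.ncard := by
  let e : {w // IsSepPair π w} ≃ Σ b : Fin m, {v : Fin k // IsSepPair π (finProdFinEquiv (b, v))} :=
    (finProdFinEquiv.subtypeEquivOfSubtype.symm).trans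
      (Equiv.subtypeProdEquivSigmaSubtype fun b v => IsSepPair π (finProdFinEquiv (b, v)))
  exact (Nat.card_congr e).trans Nat.card_sigma

theorem le_ncard_isSepPair_interleave_of_eq_revPerm {ρ : Fin m → Equiv.Perm (Fin (k + 1))}
    {b c : Fin m} (hbc : b < c) (hb : ρ b = Fin.revPerm) :
    k ≤ {v | IsSepPair (interleave ρ) (finProdFinEquiv (b, v))}.ncard := by
  calc k = (Set.range (Fin.castSucc : Fin k → Fin (k + 1))).ncard := by
        rw [Set.ncard_range_of_injective (Fin.castSucc_injective k), Nat.card_fin]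
    _ ≤ _ := Set.ncard_le_ncard
        (Set.range_subset_iff.mpr (isSepPair_interleave_of_eq_revPerm hbc hb))

theorem sep_le_ncard_isSepPair_interleave (ρ : Fin m → Equiv.Perm (Fin k)) (b : Fin m) :
    sep (ρ b) ≤ {v | IsSepPair (interleave ρ) (finProdFinEquiv (b, v))}.ncard :=
  Set.ncard_le_ncard fun _ hv => IsSepPair.interleave hv

theorem le_sep_interleave_snoc_revPerm (m : ℕ) (σ : Equiv.Perm (Fin (k + 1))) :
    m * k + sep σ ≤
      sep (interleave (Fin.snoc (fun _ : Fin m => Fin.revPerm) σ : Fin (m + 1) → _)) := by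
  set ρ : Fin (m + 1) → Equiv.Perm (Fin (k + 1)) := Fin.snoc (fun _ => Fin.revPerm) σ
  have hlast : ρ (Fin.last m) = σ := Fin.snoc_last _ _
  have hrev (b : Fin m) : ρ b.castSucc = Fin.revPerm := Fin.snoc_castSucc _ _ b
  calc m * k + sep σ = ∑ _ : Fin m, k + sep (ρ (Fin.last m)) := by simp [hlast]
    _ ≤ _ := add_le_add
        (Finset.sum_le_sum fun b _ =>
          le_ncard_isSepPair_interleave_of_eq_revPerm b.castSucc_lt_last (hrev b))
        (sep_le_ncard_isSepPair_interleave ρ (Fin.last m))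
    _ = sep (interleave ρ) := by rw [sep_eq_sum_ncard, Fin.sum_univ_castSucc]

end Interleave

theorem tau_even_ge'_general (m k : ℕ) : m * k + tau (k + 1) ≤ tau ((m + 1) * (k + 1)) := by
  obtain ⟨σ, hσ⟩ := exists_sep_eq_tau (k + 1)
  rw [← hσ]
  exact (le_sep_interleave_snoc_revPerm m σ).trans (sep_le_tau _)

/-- For `k ≥ 1`, `τ(2k) ≥ k - 1 + τ(k)`. -/
theorem tau_even_ge' (k : ℕ) (hk : 1 ≤ k) : k - 1 + tau k ≤ tau (2 * k) := by
  obtain ⟨j, rfl⟩ := Nat.exists_eq_add_of_le' hk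
  simpa only [Nat.add_sub_cancel, one_mul, one_add_one_eq_two] using tau_even_ge'_general 1 j
end

section
/- For every positive integer n, the maximum number of separated pairs among permutations of length n is given by τ(n) = n − 1 − ⌊log₂(n)⌋. -/
/-!
Upper bound: for a value `v`, let `r` be the number of larger values to the right of `v` and `k` the
number of values `w ≥ v` for which `(w + 1, w)` is not a separated pair. Going down from the
largest value, `n - v + r + 1 ≤ 2 ^ k` is preserved: at a separated pair `r` drops while `n - v`
grows by one, and at any other step the right side doubles, which suffices because `r < n - v`. At
`v = 0` this gives `n < 2 ^ k`, so at least `⌊log₂ n⌋ + 1` values are counted by `k`.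

Lower bound: relabel the values by `x = n - v` and sort them by the mantissa of `2 * x + 1`, where
the mantissa of `m` is `m / 2 ^ ⌊log₂ m⌋`. If `x = 2 ^ j * (2 * c + 1)` with `c ≥ 1`, the mantissas
of `2 * x - 1`, `2 * x` and `2 * x + 1` increase strictly and that of `2 * x` equals that of
`2 * c + 1`. Hence label `c`, a larger value, stands between labels `x - 1` and `x`, and only powers
of two fail.
-/

open Finset

variable {n : ℕ}

lemma isSepPair_castSucc_iff {π : Equiv.Perm (Fin (n + 1))} {i : Fin n} :
    IsSepPair π i.castSucc ↔
      ∃ w, i.succ < w ∧ π.symm i.succ < π.symm w ∧ π.symm w < π.symm i.castSucc := by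
  constructor
  · rintro ⟨p, q, r, hpq, hqr, hp, hq, hr⟩
    have hp' : π p = i.succ := Fin.ext (by simpa using hp)
    refine ⟨π q, by simpa [Fin.lt_def] using hq, ?_, ?_⟩
    · simpa [← hp'] using hpq
    · simpa [← hr] using hqr
  · rintro ⟨w, hw, hleft, hright⟩
    exact ⟨_, _, _, hleft, hright, by simp, by simpa [Fin.lt_def] using hw, by simp⟩

lemma not_isSepPair_last (π : Equiv.Perm (Fin (n + 1))) : ¬ IsSepPair π (Fin.last n) := by
  rintro ⟨p, -, -, -, -, hp, -⟩
  exact (π p).is_lt.ne hp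

/-- The number of values larger than `v` that stand to the right of `v` in `π`. -/
def rightCount (π : Equiv.Perm (Fin n)) (v : Fin n) : ℕ :=
  #{w ∈ Ioi v | π.symm v < π.symm w}

lemma rightCount_le_rev (π : Equiv.Perm (Fin n)) (v : Fin n) : rightCount π v ≤ v.rev := by
  calc rightCount π v ≤ #(Ioi v) := card_filter_le _ _
    _ = v.rev := by rw [Fin.card_Ioi, Fin.val_rev, Nat.sub_sub, add_comm]

lemma IsSepPair.rightCount_castSucc_lt {π : Equiv.Perm (Fin (n + 1))} {i : Fin n}
    (h : IsSepPair π i.castSucc) : rightCount π i.castSucc < rightCount π i.succ := by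
  obtain ⟨w, hw, hleft, hright⟩ := isSepPair_castSucc_iff.1 h
  refine card_lt_card ((ssubset_iff_of_subset fun x hx => ?_).2 ⟨w, ?_, ?_⟩)
  · simp only [mem_filter, mem_Ioi] at hx ⊢
    have hpos : π.symm i.succ < π.symm x := (hleft.trans hright).trans hx.2
    have hne : i.succ ≠ x := by
      rintro rfl
      exact hpos.false
    exact ⟨(Fin.castSucc_lt_iff_succ_le.1 hx.1).lt_of_ne hne, hpos⟩
  · simp [hw, hleft]
  · simp [hright.le]

open Classical in
/-- The number of values `w ≥ v` such that `(w + 1, w)` is not a separated pair of `π`. The largest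
value is always counted, since it has no successor. -/
noncomputable def nonsepCount (π : Equiv.Perm (Fin n)) (v : Fin n) : ℕ :=
  #{w ∈ Ici v | ¬ IsSepPair π w}

lemma nonsepCount_last (π : Equiv.Perm (Fin (n + 1))) : nonsepCount π (Fin.last n) = 1 := by
  have hIci : Ici (Fin.last n) = {Fin.last n} := Ici_top
  simp [nonsepCount, hIci, filter_singleton, not_isSepPair_last]

open Classical in
lemma nonsepCount_castSucc (π : Equiv.Perm (Fin (n + 1))) (i : Fin n) :
    nonsepCount π i.castSucc =
      nonsepCount π i.succ + if IsSepPair π i.castSucc then 0 else 1 := by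
  have hIci : Ici i.castSucc = insert i.castSucc (Ici i.succ) := by
    ext w
    rw [mem_insert, mem_Ici, mem_Ici, ← Fin.castSucc_lt_iff_succ_le, le_iff_eq_or_lt, eq_comm]
  unfold nonsepCount
  rw [hIci, filter_insert]
  split_ifs <;> simp_all

lemma sep_add_nonsepCount_zero (π : Equiv.Perm (Fin (n + 1))) :
    sep π + nonsepCount π 0 = n + 1 := by
  classical
  have hIci : Ici (0 : Fin (n + 1)) = univ := Ici_bot
  have hsep : sep π = #{w | IsSepPair π w} := by
    simp [sep, ← Set.ncard_coe_finset]
  rw [hsep, nonsepCount, hIci, card_filter_add_card_filter_not, card_univ, Fintype.card_fin]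

lemma rev_add_rightCount_add_two_le_two_pow (π : Equiv.Perm (Fin (n + 1))) (v : Fin (n + 1)) :
    v.rev + rightCount π v + 2 ≤ 2 ^ nonsepCount π v := by
  classical
  induction v using Fin.reverseInduction with
  | last =>
    have hright := rightCount_le_rev π (Fin.last n)
    simp only [Fin.rev_last, Fin.val_zero] at hright ⊢
    rw [nonsepCount_last]
    omega
  | cast i ih =>
    have hright := rightCount_le_rev π i.castSucc
    simp only [Fin.rev_castSucc, Fin.rev_succ, Fin.val_succ, Fin.val_castSucc] at hright ih ⊢
    rw [nonsepCount_castSucc]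
    split_ifs with hsep
    · have hlt := hsep.rightCount_castSucc_lt
      rw [add_zero]
      omega
    · rw [pow_succ]
      omega

lemma log_lt_nonsepCount_zero (π : Equiv.Perm (Fin (n + 1))) :
    Nat.log 2 (n + 1) < nonsepCount π 0 := by
  refine Nat.log_lt_of_lt_pow n.succ_ne_zero ?_
  have hpow := rev_add_rightCount_add_two_le_two_pow π 0
  simp only [Fin.rev_zero, Fin.val_last] at hpow
  omega

/-- The mantissa of `x` in base `b`: for `1 < b` and `x ≠ 0`, the number in `[1, b)` obtained by
dividing `x` by a power of `b`. -/
def mantissa (b x : ℕ) : ℚ := x / b ^ Nat.log b x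

lemma mantissa_base_mul {b x : ℕ} (hb : 1 < b) (hx : x ≠ 0) :
    mantissa b (b * x) = mantissa b x := by
  have hb' : (b : ℚ) ≠ 0 := by positivity
  rw [mantissa, mantissa, mul_comm, Nat.log_mul_base hb hx, pow_succ, Nat.cast_mul,
    mul_div_mul_right _ _ hb']

lemma mantissa_base_pow_mul {b x : ℕ} (hb : 1 < b) (hx : x ≠ 0) (k : ℕ) :
    mantissa b (b ^ k * x) = mantissa b x := by
  induction k with
  | zero => rw [pow_zero, one_mul]
  | succ k ih => rw [pow_succ', mul_assoc, mantissa_base_mul hb (by positivity), ih]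

lemma strictMonoOn_mantissa {b : ℕ} (hb : b ≠ 0) (k : ℕ) :
    StrictMonoOn (mantissa b) (Set.Ico (b ^ k) (b ^ (k + 1))) := by
  intro x hx y hy hxy
  rw [mantissa, mantissa, Nat.log_eq_of_pow_le_of_lt_pow hx.1 hx.2,
    Nat.log_eq_of_pow_le_of_lt_pow hy.1 hy.2]
  gcongr

lemma exists_mantissa_two_mul_add_one_eq {x : ℕ} (hx : x ≠ 0) (hpow : ∀ k, x ≠ 2 ^ k) :
    ∃ c, 0 < c ∧ c + 1 < x ∧ mantissa 2 (2 * c + 1) = mantissa 2 x := by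
  obtain ⟨k, _, ⟨c, rfl⟩, rfl⟩ := Nat.exists_eq_two_pow_mul_odd hx
  have hc : c ≠ 0 := by
    rintro rfl
    exact hpow k (by simp)
  have hle : 2 * c + 1 ≤ 2 ^ k * (2 * c + 1) := Nat.le_mul_of_pos_left _ (by positivity)
  exact ⟨c, by omega, by omega, (mantissa_base_pow_mul one_lt_two (by omega) k).symm⟩

lemma mantissa_lt_mantissa_two_mul_add_one {x : ℕ} (hx : x ≠ 0) :
    mantissa 2 x < mantissa 2 (2 * x + 1) := by
  have hle : 2 ^ Nat.log 2 x ≤ x := Nat.pow_log_le_self 2 hx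
  have hlt : x < 2 ^ (Nat.log 2 x + 1) := Nat.lt_pow_succ_log_self one_lt_two x
  rw [← mantissa_base_mul one_lt_two hx]
  apply strictMonoOn_mantissa two_ne_zero (Nat.log 2 x + 1) <;> grind

lemma mantissa_two_mul_sub_one_lt_mantissa {x : ℕ} (hx : x ≠ 0) (hpow : ∀ k, x ≠ 2 ^ k) :
    mantissa 2 (2 * x - 1) < mantissa 2 x := by
  have hlt : 2 ^ Nat.log 2 x < x := (Nat.pow_log_le_self 2 hx).lt_of_ne (hpow _).symm
  have hlt' : x < 2 ^ (Nat.log 2 x + 1) := Nat.lt_pow_succ_log_self one_lt_two x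
  rw [← mantissa_base_mul one_lt_two hx]
  apply strictMonoOn_mantissa two_ne_zero (Nat.log 2 x + 1) <;> grind

/-- The permutation attaining the maximal number of separated pairs: it lists the values `v` in the
order of the binary mantissas of `2 * x + 1`, where `x = n - v` is written as `v.rev + 1`. -/
def mantissaPerm (n : ℕ) : Equiv.Perm (Fin n) :=
  Tuple.sort fun v : Fin n => mantissa 2 (2 * (v.rev + 1) + 1)

lemma mantissaPerm_symm_lt {v w : Fin n}
    (h : mantissa 2 (2 * (v.rev + 1) + 1) < mantissa 2 (2 * (w.rev + 1) + 1)) :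
    (mantissaPerm n).symm v < (mantissaPerm n).symm w :=
  (Tuple.monotone_sort fun v : Fin n => mantissa 2 (2 * (v.rev + 1) + 1)).reflect_lt
    (by simpa [mantissaPerm] using h)

lemma isSepPair_mantissaPerm {v : Fin (n + 1)} (hv : ∀ k, (v.rev + 1 : ℕ) ≠ 2 ^ k) :
    IsSepPair (mantissaPerm (n + 1)) v := by
  cases v using Fin.lastCases with
  | last => exact absurd (by simp) (hv 0)
  | cast i =>
    have hprev := mantissa_two_mul_sub_one_lt_mantissa (Nat.succ_ne_zero _) hv
    have hnext := mantissa_lt_mantissa_two_mul_add_one (Nat.succ_ne_zero i.castSucc.rev)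
    obtain ⟨c, hc, hci, hcv⟩ := exists_mantissa_two_mul_add_one_eq (Nat.succ_ne_zero _) hv
    rw [← hcv] at hprev hnext
    simp only [Fin.rev_castSucc, Fin.val_succ] at hci
    let w : Fin (n + 1) := Fin.rev ⟨c - 1, by omega⟩
    have hw : (w.rev + 1 : ℕ) = c := by
      simp only [w, Fin.rev_rev]
      omega
    refine isSepPair_castSucc_iff.2 ⟨w, ?_, mantissaPerm_symm_lt ?_, mantissaPerm_symm_lt ?_⟩
    · rw [← Fin.rev_lt_rev, Fin.lt_def, Fin.rev_succ, Fin.val_castSucc]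
      omega
    · rw [hw]
      simpa [Fin.rev_castSucc, Fin.rev_succ, mul_add] using hprev
    · rwa [hw]

lemma nonsepCount_mantissaPerm_le (n : ℕ) :
    nonsepCount (mantissaPerm (n + 1)) 0 ≤ Nat.log 2 (n + 1) + 1 := by
  classical
  calc nonsepCount (mantissaPerm (n + 1)) 0
      ≤ #((range (Nat.log 2 (n + 1) + 1)).image (2 ^ ·)) := by
        refine card_le_card_of_injOn (fun v => v.rev + 1) (fun v hv => ?_) fun v _ w _ hvw => ?_
        · obtain ⟨k, hk⟩ : ∃ k, (v.rev + 1 : ℕ) = 2 ^ k := by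
            by_contra! hpow
            exact (mem_filter.1 hv).2 (isSepPair_mantissaPerm hpow)
          have hlog : k ≤ Nat.log 2 (n + 1) :=
            Nat.le_log_of_pow_le one_lt_two (hk ▸ v.rev.is_lt)
          exact mem_image.2 ⟨k, mem_range_succ_iff.2 hlog, hk.symm⟩
        · exact Fin.rev_injective (Fin.ext (Nat.succ_injective hvw))
    _ ≤ Nat.log 2 (n + 1) + 1 := card_image_le.trans_eq (card_range _)

/-- For every positive `n`, `τ(n) = n - 1 - ⌊log₂ n⌋`. -/
theorem tau_formula (n : ℕ) (hn : 1 ≤ n) : tau n = n - 1 - Nat.log 2 n := by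
  obtain ⟨m, rfl⟩ := Nat.exists_eq_add_of_le' hn
  apply le_antisymm
  · refine Finset.sup_le fun π _ => ?_
    have hsum := sep_add_nonsepCount_zero π
    have hlog := log_lt_nonsepCount_zero π
    omega
  · have hmax : sep (mantissaPerm (m + 1)) ≤ tau (m + 1) := le_sup (mem_univ _)
    have hsum := sep_add_nonsepCount_zero (mantissaPerm (m + 1))
    have hlog := nonsepCount_mantissaPerm_le m
    omega
end

section
/- For every positive integer n, the identity Σ_{j=1}^{n} ⌊(n ∸ 2^{j−1})/2^j⌋ = n − 1 − ⌊log₂(n)⌋ holds, where ∸ denotes truncated (natural-number) subtraction and the division is floor division; note that all summands with 2^{j−1} > n vanish. -/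
/-!
Let `qₖ = ⌊n / 2 ^ k⌋`, so that `⌊qₖ / 2⌋ = qₖ₊₁`. The `j`-th summand is `⌊(qⱼ₋₁ ∸ 1) / 2⌋`, and
`⌊q / 2⌋ + ⌊(q - 1) / 2⌋ = q - 1` for `q ≥ 1`, so it equals `qⱼ₋₁ - qⱼ - 1` as long as `qⱼ₋₁ ≥ 1`,
and `0` afterwards. The sum telescopes to `n` minus the number of `k` with `2 ^ k ≤ n`, which is
the number of binary digits of `n`.
-/

theorem sub_div_mul_eq_div_sub_one_div (n d b : ℕ) : (n - d) / (d * b) = (n / d - 1) / b := by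
  rw [← Nat.div_div_eq_div_mul, ← Nat.sub_mul_div n d 1, mul_one]

theorem div_two_add_sub_one_div_two (q : ℕ) : q / 2 + (q - 1) / 2 = q - 1 := by
  omega

theorem sum_sub_two_pow_div_add_div_add_min_size (n m : ℕ) :
    ∑ j ∈ Finset.Icc 1 m, (n - 2 ^ (j - 1)) / 2 ^ j + n / 2 ^ m + min m n.size = n := by
  induction m with
  | zero => simp
  | succ m ih =>
    have summand_eq : (n - 2 ^ m) / 2 ^ (m + 1) = (n / 2 ^ m - 1) / 2 := by
      rw [pow_succ, sub_div_mul_eq_div_sub_one_div]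
    have quotient_eq : n / 2 ^ (m + 1) = n / 2 ^ m / 2 := by
      rw [pow_succ, Nat.div_div_eq_div_mul]
    have add_halves : n / 2 ^ m / 2 + (n / 2 ^ m - 1) / 2 = n / 2 ^ m - 1 :=
      div_two_add_sub_one_div_two _
    have lt_size_iff : m < n.size ↔ 0 < n / 2 ^ m := by
      rw [Nat.lt_size, Nat.div_pos_iff, and_iff_right (Nat.two_pow_pos m)]
    rw [Finset.sum_Icc_succ_top (Nat.le_add_left 1 m), Nat.add_sub_cancel, summand_eq, quotient_eq]
    omega

theorem sum_sub_two_pow_div_eq_sub_size {n m : ℕ} (hnm : n < 2 ^ m) :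
    ∑ j ∈ Finset.Icc 1 m, (n - 2 ^ (j - 1)) / 2 ^ j = n - n.size := by
  have telescoped := sum_sub_two_pow_div_add_div_add_min_size n m
  rw [Nat.div_eq_of_lt hnm, min_eq_right (Nat.size_le.2 hnm), add_zero] at telescoped
  exact Nat.eq_sub_of_add_eq telescoped

theorem size_eq_log_two_add_one {n : ℕ} (hn : n ≠ 0) : n.size = Nat.log 2 n + 1 :=
  eq_of_forall_lt_iff fun k ↦ by
    rw [Nat.lt_size, Nat.lt_succ_iff, Nat.le_log_iff_pow_le Nat.one_lt_two hn]

/-- `∑_{j=1}^{n} ⌊(n ∸ 2^(j-1)) / 2^j⌋ = n - 1 - ⌊log₂ n⌋` for positive `n`,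
using truncated subtraction and floor division. -/
theorem sum_floor_eq (n : ℕ) (hn : 1 ≤ n) :
    ∑ j ∈ Finset.Icc 1 n, (n - 2 ^ (j - 1)) / 2 ^ j = n - 1 - Nat.log 2 n := by
  rw [sum_sub_two_pow_div_eq_sub_size Nat.lt_two_pow_self,
    size_eq_log_two_add_one (Nat.one_le_iff_ne_zero.1 hn), Nat.sub_sub, add_comm 1]
end

section
/- For every integer k ≥ 1, setting n = 2^k − 1, there is exactly one permutation π of length n with sep(π) = τ(n) = n − 1 − ⌊log₂(n)⌋; that is, the permutation of length 2^k − 1 of maximal tier is unique. -/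
/-!
Fix a value `t`, let `a` be the least value `≥ t` that is not separated, and call `t, …, a` a run.
The positions of `a, a - 1, …, t` increase, and each of the `a - t` gaps between consecutive ones
holds the position of a value larger than `a`. Hence `a - t ≤ n - 1 - a`: if there are `N` values
`≥ t` and `N'` values `> a`, then `N + 1 ≤ 2 (N' + 1)`, while exactly one non-separated value is
lost on the way. Therefore `n + 1 ≤ 2 ^ j`, where `j` is the number of non-separated values. In the
case of equality every gap holds exactly one larger value, so the relative order of the values `> a`
determines that of the values `≥ t`, and the permutation is unique. Reading this interleaving
backwards gives the extremal permutation.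
-/

open scoped Finset

section Separated

variable {α : Type*} [Preorder α] {pos : ℕ → α} {n t a : ℕ}

/-- `IsSepPair` for `(v + 1, v)`, read off the function `pos` that sends each of the values
`0, …, n - 1` to its position. Positions may lie in any order, since only their relative order
matters; the values of `pos` at `n` and beyond are ignored. -/
def Separated (n : ℕ) (pos : ℕ → α) (v : ℕ) : Prop :=
  ∃ w ∈ Set.Ioo (v + 1) n, pos w ∈ Set.Ioo (pos (v + 1)) (pos v)

lemma Separated.pos_succ_lt {v : ℕ} (h : Separated n pos v) : pos (v + 1) < pos v :=
  let ⟨_, _, hw⟩ := h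
  hw.1.trans hw.2

lemma Separated.succ_lt {v : ℕ} (h : Separated n pos v) : v + 1 < n :=
  let ⟨_, hw, _⟩ := h
  hw.1.trans hw.2

open Classical in
/-- The values in `[t, n)` that are not separated. -/
noncomputable def unseparated (n : ℕ) (pos : ℕ → α) (t : ℕ) : Finset ℕ :=
  {v ∈ Finset.Ico t n | ¬ Separated n pos v}

lemma mem_unseparated {v : ℕ} :
    v ∈ unseparated n pos t ↔ (t ≤ v ∧ v < n) ∧ ¬ Separated n pos v := by
  simp [unseparated]

lemma unseparated_nonempty (ht : t < n) : (unseparated n pos t).Nonempty :=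
  ⟨n - 1, mem_unseparated.2 ⟨by omega, fun h => by have := h.succ_lt; omega⟩⟩

lemma exists_maximal_run (ht : t < n) :
    ∃ a ∈ Set.Ico t n, (∀ i ∈ Set.Ico t a, Separated n pos i) ∧
      #(unseparated n pos (a + 1)) + 1 = #(unseparated n pos t) := by
  set a := (unseparated n pos t).min' (unseparated_nonempty ht)
  have ha : a ∈ unseparated n pos t := Finset.min'_mem _ _
  have hmin : ∀ i ∈ unseparated n pos t, a ≤ i := fun i hi => Finset.min'_le _ i hi
  have htail : unseparated n pos (a + 1) = (unseparated n pos t).erase a := by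
    ext i
    have := hmin i
    simp only [Finset.mem_erase, mem_unseparated] at ha this ⊢
    grind
  rw [mem_unseparated] at ha
  refine ⟨a, ha.1, fun i hi => ?_, ?_⟩
  · by_contra hsep
    exact (hmin i (mem_unseparated.2 ⟨⟨hi.1, hi.2.trans ha.1.2⟩, hsep⟩)).not_gt hi.2
  · rw [htail, Finset.card_erase_add_one (mem_unseparated.2 ha)]

lemma strictAntiOn_of_separated (h : ∀ i ∈ Set.Ico t a, Separated n pos i) :
    StrictAntiOn pos (Set.Icc t a) :=
  strictAntiOn_of_add_one_lt Set.ordConnected_Icc fun i _ hi hi' =>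
    (h i ⟨hi.1, hi'.2⟩).pos_succ_lt

open Classical in
/-- The values above `a` placed before position `x`. -/
noncomputable def largerBefore (n : ℕ) (pos : ℕ → α) (a : ℕ) (x : α) : Finset ℕ :=
  {u ∈ Finset.Ioo a n | pos u < x}

lemma mem_largerBefore {x : α} {u : ℕ} :
    u ∈ largerBefore n pos a x ↔ u ∈ Set.Ioo a n ∧ pos u < x := by
  simp [largerBefore]

lemma card_largerBefore_le (x : α) : #(largerBefore n pos a x) ≤ n - a - 1 := by
  classical exact (Finset.card_filter_le _ _).trans_eq (Nat.card_Ioo a n)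

lemma largerBefore_mono {x y : α} (h : x ≤ y) : largerBefore n pos a x ⊆ largerBefore n pos a y :=
  fun _ hu =>
    let ⟨hmem, hlt⟩ := mem_largerBefore.1 hu
    mem_largerBefore.2 ⟨hmem, hlt.trans_le h⟩

lemma card_largerBefore_lt {x y : α} {u : ℕ} (hu : u ∈ Set.Ioo a n) (hx : x ≤ pos u)
    (hy : pos u < y) : #(largerBefore n pos a x) < #(largerBefore n pos a y) :=
  Finset.card_lt_card <| (Finset.ssubset_iff_of_subset <| largerBefore_mono (hx.trans hy.le)).2
    ⟨u, mem_largerBefore.2 ⟨hu, hy⟩, fun h => (mem_largerBefore.1 h).2.not_ge hx⟩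

lemma strictAntiOn_card_largerBefore (h : ∀ i ∈ Set.Ico t a, Separated n pos i) :
    StrictAntiOn (fun i => #(largerBefore n pos a (pos i))) (Set.Icc t a) := by
  refine strictAntiOn_of_add_one_lt Set.ordConnected_Icc fun i _ hi hi' => ?_
  obtain ⟨w, hw, hpos⟩ := h i ⟨hi.1, hi'.2⟩
  -- The value separating `(i + 1, i)` exceeds `a`: those in `[i + 1, a]` sit no later than `i + 1`.
  have haw : a < w := by
    by_contra! hwa
    exact ((strictAntiOn_of_separated h).antitoneOn hi' ⟨hi.1.trans (by grind), hwa⟩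
      hw.1.le).not_gt hpos.1
  exact card_largerBefore_lt ⟨haw, hw.2⟩ hpos.1.le hpos.2

lemma add_sub_le_of_strictAntiOn {f : ℕ → ℕ} (hf : StrictAntiOn f (Set.Icc t a)) {i j : ℕ}
    (hi : t ≤ i) (hij : i ≤ j) (hj : j ≤ a) : f j + (j - i) ≤ f i := by
  induction j, hij using Nat.le_induction with
  | base => simp
  | succ j hij ih =>
    have hlt : f (j + 1) < f j := hf ⟨by omega, by omega⟩ ⟨by omega, hj⟩ j.lt_succ_self
    have := ih (by omega)
    omega

lemma two_mul_add_one_le_of_run (h : ∀ i ∈ Set.Ico t a, Separated n pos i) (ha : a ∈ Set.Ico t n) :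
    2 * a + 1 ≤ n + t := by
  have hgaps := add_sub_le_of_strictAntiOn (strictAntiOn_card_largerBefore h) le_rfl ha.1 le_rfl
  have htop := card_largerBefore_le (n := n) (pos := pos) (a := a) (pos t)
  grind

lemma card_largerBefore_of_run (h : ∀ i ∈ Set.Ico t a, Separated n pos i)
    (hn : n + t = 2 * a + 1) {i : ℕ} (hi : i ∈ Set.Icc t a) :
    #(largerBefore n pos a (pos i)) = a - i := by
  have hanti := strictAntiOn_card_largerBefore h
  have hright := add_sub_le_of_strictAntiOn hanti hi.1 hi.2 le_rfl
  have hleft := add_sub_le_of_strictAntiOn hanti le_rfl hi.1 hi.2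
  have htop := card_largerBefore_le (n := n) (pos := pos) (a := a) (pos t)
  grind

theorem lt_two_pow_card_unseparated_add (n : ℕ) (pos : ℕ → α) (t : ℕ) :
    n < 2 ^ #(unseparated n pos t) + t := by
  induction hk : #(unseparated n pos t) generalizing t with
  | zero =>
    have := mt unseparated_nonempty (Finset.not_nonempty_iff_eq_empty.2 (Finset.card_eq_zero.1 hk))
    omega
  | succ k ih =>
    rcases le_or_gt n t with hnt | htn
    · exact hnt.trans_lt (Nat.lt_add_of_pos_left (k + 1).two_pow_pos)
    obtain ⟨a, ha, hrun, hcard⟩ := exists_maximal_run (pos := pos) htn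
    have := ih (a + 1) (by omega)
    have := two_mul_add_one_le_of_run hrun ha
    rw [pow_succ]
    omega

lemma run_of_two_pow_add {k : ℕ} (hk : #(unseparated n pos t) = k + 1)
    (hn : n + 1 = 2 ^ (k + 1) + t) (ha : a + 1 = 2 ^ k + t) :
    (∀ i ∈ Set.Ico t a, Separated n pos i) ∧ #(unseparated n pos (a + 1)) = k := by
  have := k.two_pow_pos
  rw [pow_succ] at hn
  obtain ⟨b, hb, hrun, hcard⟩ := exists_maximal_run (pos := pos) (t := t) (n := n) (by omega)
  have hk' : #(unseparated n pos (b + 1)) = k := by omega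
  obtain rfl : a = b := by
    have hlarge := lt_two_pow_card_unseparated_add n pos (b + 1)
    have hsmall := two_mul_add_one_le_of_run hrun hb
    rw [hk'] at hlarge
    omega
  exact ⟨hrun, hk'⟩

end Separated

section SameOrderOn

/-- `f` and `g` put the elements of `s` in the same relative order. -/
def SameOrderOn {ι α β : Type*} [LT α] [LT β] (f : ι → α) (g : ι → β) (s : Set ι) : Prop :=
  ∀ u ∈ s, ∀ v ∈ s, (f u < f v ↔ g u < g v)

variable {α β : Type*} [LinearOrder α] [LinearOrder β] {pos : ℕ → α} {pos' : ℕ → β}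
  {n t a : ℕ}

lemma equiv_eq_of_sameOrderOn_univ [WellFoundedLT α] {ι : Type*} {e f : ι ≃ α}
    (h : SameOrderOn e f Set.univ) : e = f := by
  let g : α ≃o α := StrictMono.orderIsoOfSurjective (f ∘ e.symm)
    (fun x y hxy => (h _ trivial _ trivial).1 (by simpa using hxy))
    (f.surjective.comp e.symm.surjective)
  have hg : g = OrderIso.refl α := Subsingleton.elim _ _
  ext i
  calc e i = g (e i) := by rw [hg, OrderIso.refl_apply]
    _ = f i := congrArg f (e.symm_apply_apply i)

lemma pos_lt_iff_card_largerBefore_lt {x : α} {u : ℕ} (hu : u ∈ Set.Ioo a n) :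
    pos u < x ↔ #(largerBefore n pos a (pos u)) < #(largerBefore n pos a x) :=
  ⟨card_largerBefore_lt hu le_rfl,
    fun h => lt_of_not_ge fun hx => (Finset.card_le_card (largerBefore_mono hx)).not_gt h⟩

lemma SameOrderOn.pos_lt_iff_of_run (hsame : SameOrderOn pos pos' (Set.Ioo a n))
    (h : ∀ i ∈ Set.Ico t a, Separated n pos i) (h' : ∀ i ∈ Set.Ico t a, Separated n pos' i)
    (hn : n + t = 2 * a + 1) {u i : ℕ} (hu : u ∈ Set.Ioo a n) (hi : i ∈ Set.Icc t a) :
    pos u < pos i ↔ pos' u < pos' i := by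
  have hrank : largerBefore n pos a (pos u) = largerBefore n pos' a (pos' u) := by
    ext v
    rw [mem_largerBefore, mem_largerBefore, and_congr_right fun hv => hsame v hv u hu]
  rw [pos_lt_iff_card_largerBefore_lt hu, pos_lt_iff_card_largerBefore_lt hu, hrank,
    card_largerBefore_of_run h hn hi, card_largerBefore_of_run h' hn hi]

lemma SameOrderOn.extend_of_run (hsame : SameOrderOn pos pos' (Set.Ioo a n))
    (hinj : Set.InjOn pos (Set.Iio n)) (hinj' : Set.InjOn pos' (Set.Iio n))
    (h : ∀ i ∈ Set.Ico t a, Separated n pos i) (h' : ∀ i ∈ Set.Ico t a, Separated n pos' i)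
    (hn : n + t = 2 * a + 1) : SameOrderOn pos pos' (Set.Ico t n) := by
  have hcross {u i : ℕ} (hu : u ∈ Set.Ioo a n) (hi : i ∈ Set.Icc t a) :=
    hsame.pos_lt_iff_of_run h h' hn hu hi
  rintro u ⟨htu, hun⟩ v ⟨htv, hvn⟩
  rcases le_or_gt u a with hua | hau <;> rcases le_or_gt v a with hva | hav
  · rw [(strictAntiOn_of_separated h).lt_iff_gt ⟨htu, hua⟩ ⟨htv, hva⟩,
      (strictAntiOn_of_separated h').lt_iff_gt ⟨htu, hua⟩ ⟨htv, hva⟩]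
  · have hne : u ≠ v := by omega
    rw [← not_iff_not, not_lt, not_lt, (hinj.ne hvn hun hne.symm).le_iff_lt,
      (hinj'.ne hvn hun hne.symm).le_iff_lt]
    exact hcross ⟨hav, hvn⟩ ⟨htu, hua⟩
  · exact hcross ⟨hau, hun⟩ ⟨htv, hva⟩
  · exact hsame u ⟨hau, hun⟩ v ⟨hav, hvn⟩

theorem sameOrderOn_of_card_unseparated (hinj : Set.InjOn pos (Set.Iio n))
    (hinj' : Set.InjOn pos' (Set.Iio n)) {k : ℕ} (hk : #(unseparated n pos t) = k)
    (hk' : #(unseparated n pos' t) = k) (hn : n + 1 = 2 ^ k + t) :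
    SameOrderOn pos pos' (Set.Ico t n) := by
  induction k generalizing t with
  | zero =>
    rw [show t = n by omega, Set.Ico_self]
    simp [SameOrderOn]
  | succ k ih =>
    obtain ⟨a, ha⟩ : ∃ a, a + 1 = 2 ^ k + t :=
      Nat.exists_add_one_eq.2 (Nat.add_pos_left k.two_pow_pos t)
    obtain ⟨hrun, htail⟩ := run_of_two_pow_add hk hn ha
    obtain ⟨hrun', htail'⟩ := run_of_two_pow_add hk' hn ha
    rw [pow_succ] at hn
    have hsame : SameOrderOn pos pos' (Set.Ioo a n) := ih htail htail' (by omega)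
    exact hsame.extend_of_run hinj hinj' hrun hrun' (by omega)

end SameOrderOn

section Perm

variable {n : ℕ}

/-- The position in `π` of each value, extended by `position π v = v` for `v ≥ n` so as to be
injective on all of `ℕ`. -/
def position (π : Equiv.Perm (Fin n)) : ℕ → ℕ :=
  Equiv.Perm.extendDomain π.symm Fin.equivSubtype

lemma position_injective (π : Equiv.Perm (Fin n)) : Function.Injective (position π) :=
  (Equiv.Perm.extendDomain π.symm Fin.equivSubtype).injective

lemma position_val (π : Equiv.Perm (Fin n)) (v : Fin n) : position π v = π.symm v :=
  Equiv.Perm.extendDomain_apply_image π.symm Fin.equivSubtype v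

lemma position_apply (π : Equiv.Perm (Fin n)) (p : Fin n) : position π (π p) = p := by
  rw [position_val, π.symm_apply_apply]

lemma isSepPair_iff_separated (π : Equiv.Perm (Fin n)) (v : Fin n) :
    IsSepPair π v ↔ Separated n (position π) v := by
  constructor
  · rintro ⟨p, q, r, hpq, hqr, hp, hq, rfl⟩
    refine ⟨π q, ⟨hq, (π q).isLt⟩, ?_⟩
    simpa only [← hp, position_apply, Set.mem_Ioo, Fin.val_fin_lt] using And.intro hpq hqr
  · intro h
    obtain ⟨w, ⟨hvw, hwn⟩, hpos⟩ := h
    lift w to Fin n using hwn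
    obtain ⟨s, hs⟩ : ∃ s : Fin n, (s : ℕ) = v + 1 := ⟨⟨v + 1, hvw.trans w.isLt⟩, rfl⟩
    simp only [← hs, position_val, Set.mem_Ioo, Fin.val_fin_lt] at hpos
    exact ⟨π.symm s, π.symm w, π.symm v, hpos.1, hpos.2, by simpa using hs, by simpa using hvw,
      π.apply_symm_apply v⟩

lemma sep_add_card_unseparated (π : Equiv.Perm (Fin n)) :
    sep π + #(unseparated n (position π) 0) = n := by
  classical
  have hsep : sep π = #{v ∈ Finset.range n | Separated n (position π) v} := by
    rw [sep, ← Set.ncard_image_of_injective _ Fin.val_injective, ← Set.ncard_coe_finset]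
    congr 1
    ext v
    simp [isSepPair_iff_separated, Fin.exists_iff, and_comm]
  rw [hsep, unseparated, Nat.Ico_zero_eq_range, Finset.card_filter_add_card_filter_not,
    Finset.card_range]

theorem lt_two_pow_sub_sep (π : Equiv.Perm (Fin n)) : n < 2 ^ (n - sep π) := by
  have hadd := sep_add_card_unseparated π
  have hlt := lt_two_pow_card_unseparated_add n (position π) 0
  rwa [show #(unseparated n (position π) 0) = n - sep π by omega] at hlt

theorem eq_of_sep_add {k : ℕ} (hn : n + 1 = 2 ^ k) {π σ : Equiv.Perm (Fin n)}
    (hπ : sep π + k = n) (hσ : sep σ + k = n) : π = σ := by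
  have hcardπ := sep_add_card_unseparated π
  have hcardσ := sep_add_card_unseparated σ
  have hsame : SameOrderOn (position π) (position σ) (Set.Ico 0 n) :=
    sameOrderOn_of_card_unseparated (position_injective π).injOn (position_injective σ).injOn
      (k := k) (by omega) (by omega) hn
  refine Equiv.symm_bijective.injective (equiv_eq_of_sameOrderOn_univ fun u _ v _ => ?_)
  simpa only [position_val, Fin.val_fin_lt] using
    hsame u ⟨u.val.zero_le, u.isLt⟩ v ⟨v.val.zero_le, v.isLt⟩

end Perm

section Extremal

variable {k : ℕ}

/-- The permutation of length `2 ^ k - 1` with the most separated pairs, as a word with letters at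
`0, …, 2 ^ k - 2`: the values `2 ^ k - 1, …, 1, 0` in decreasing order occupy the even positions of
the word of index `k + 1`, and the word of index `k`, raised by `2 ^ k`, the odd ones. Letters at
other positions are irrelevant. -/
def extremalWord : ℕ → ℕ → ℕ
  | 0, _ => 0
  | k + 1, p => if Even p then 2 ^ k - 1 - p / 2 else extremalWord k (p / 2) + 2 ^ k

lemma extremalWord_two_mul (k i : ℕ) : extremalWord (k + 1) (2 * i) = 2 ^ k - 1 - i := by
  simp [extremalWord]

lemma extremalWord_two_mul_add_one (k i : ℕ) :
    extremalWord (k + 1) (2 * i + 1) = extremalWord k i + 2 ^ k := by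
  simp [extremalWord, show (2 * i + 1) / 2 = i by omega]

lemma extremalWord_lt {p : ℕ} (hp : p < 2 ^ k - 1) : extremalWord k p < 2 ^ k - 1 := by
  induction k generalizing p with
  | zero => simp at hp
  | succ k ih =>
    rw [pow_succ] at hp ⊢
    obtain ⟨i, rfl | rfl⟩ := p.even_or_odd'
    · rw [extremalWord_two_mul]
      omega
    · have := ih (p := i) (by omega)
      rw [extremalWord_two_mul_add_one]
      omega

lemma injOn_extremalWord (k : ℕ) : Set.InjOn (extremalWord k) (Set.Iio (2 ^ k - 1)) := by
  induction k with
  | zero => simp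
  | succ k ih =>
    intro p hp q hq h
    rw [Set.mem_Iio, pow_succ] at hp hq
    obtain ⟨i, rfl | rfl⟩ := p.even_or_odd' <;> obtain ⟨j, rfl | rfl⟩ := q.even_or_odd' <;>
      simp only [extremalWord_two_mul, extremalWord_two_mul_add_one] at h
    · omega
    · omega
    · omega
    · have hij : i = j := ih (Set.mem_Iio.2 (by omega)) (Set.mem_Iio.2 (by omega)) (by omega)
      rw [hij]

/- The exceptions `2 ^ k - 1 - 2 ^ j` come from the recursion: index `k + 1` adds
`2 ^ k - 1` to those of index `k` raised by `2 ^ k`. -/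
lemma exists_extremalWord_separated {v : ℕ} (hv : v < 2 ^ k - 1)
    (hne : ∀ j < k, v + 2 ^ j + 1 ≠ 2 ^ k) :
    ∃ p q r, p < q ∧ q < r ∧ r < 2 ^ k - 1 ∧
      extremalWord k p = v + 1 ∧ v + 1 < extremalWord k q ∧ extremalWord k r = v := by
  induction k generalizing v with
  | zero => simp at hv
  | succ k ih =>
    have hmid := hne k k.lt_succ_self
    rw [pow_succ] at hv hne hmid ⊢
    rcases lt_or_ge v (2 ^ k) with hlow | hhigh
    · obtain ⟨i, hi⟩ : ∃ i, v + i + 2 = 2 ^ k := ⟨2 ^ k - 2 - v, by omega⟩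
      refine ⟨2 * i, 2 * i + 1, 2 * (i + 1), by omega, by omega, by omega, ?_⟩
      simp only [extremalWord_two_mul, extremalWord_two_mul_add_one]
      omega
    · obtain ⟨u, rfl⟩ := Nat.exists_eq_add_of_le' hhigh
      obtain ⟨p, q, r, hpq, hqr, hr, hp, hq, hrv⟩ := ih (v := u) (by omega) fun j hj => by
        have := hne j (by omega)
        omega
      refine ⟨2 * p + 1, 2 * q + 1, 2 * r + 1, by omega, by omega, by omega, ?_⟩
      simp only [extremalWord_two_mul_add_one]
      omega

/-- `extremalWord k` as a permutation. -/
noncomputable def extremalPerm (k : ℕ) : Equiv.Perm (Fin (2 ^ k - 1)) :=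
  Equiv.ofBijective (fun p => ⟨extremalWord k p, extremalWord_lt p.isLt⟩) <|
    Finite.injective_iff_bijective.1 fun p q h =>
      Fin.ext (injOn_extremalWord k p.isLt q.isLt (congrArg Fin.val h))

lemma isSepPair_extremalPerm {v : Fin (2 ^ k - 1)} (hv : ∀ j < k, (v : ℕ) + 2 ^ j + 1 ≠ 2 ^ k) :
    IsSepPair (extremalPerm k) v := by
  obtain ⟨p, q, r, hpq, hqr, hr, hp, hq, hrv⟩ := exists_extremalWord_separated v.isLt hv
  exact ⟨⟨p, by omega⟩, ⟨q, by omega⟩, ⟨r, hr⟩, hpq, hqr, hp, hq, Fin.ext hrv⟩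

lemma unseparated_extremalPerm_subset (k : ℕ) :
    unseparated (2 ^ k - 1) (position (extremalPerm k)) 0 ⊆
      (Finset.range k).image fun j => 2 ^ k - 1 - 2 ^ j := by
  intro v hv
  obtain ⟨⟨-, hvn⟩, hsep⟩ := mem_unseparated.1 hv
  by_contra hmem
  refine hsep ((isSepPair_iff_separated _ ⟨v, hvn⟩).1 (isSepPair_extremalPerm fun j hj h => ?_))
  exact hmem (Finset.mem_image.2 ⟨j, Finset.mem_range.2 hj, by grind⟩)

theorem sep_add_le_two_pow_sub_one (π : Equiv.Perm (Fin (2 ^ k - 1))) : sep π + k ≤ 2 ^ k - 1 := by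
  have hlt := lt_two_pow_sub_sep π
  have hk : k ≤ 2 ^ k - 1 - sep π := (Nat.pow_le_pow_iff_right one_lt_two).1 (by omega)
  have := sep_add_card_unseparated π
  omega

theorem sep_extremalPerm_add (k : ℕ) : sep (extremalPerm k) + k = 2 ^ k - 1 := by
  refine (sep_add_le_two_pow_sub_one _).antisymm ?_
  calc 2 ^ k - 1 = sep (extremalPerm k) + #(unseparated _ (position (extremalPerm k)) 0) :=
        (sep_add_card_unseparated _).symm
    _ ≤ sep (extremalPerm k) + #((Finset.range k).image fun j => 2 ^ k - 1 - 2 ^ j) := by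
        gcongr
        exact unseparated_extremalPerm_subset k
    _ ≤ sep (extremalPerm k) + k := by
        gcongr
        exact Finset.card_image_le.trans_eq (Finset.card_range k)

theorem tau_two_pow_sub_one_add (k : ℕ) : tau (2 ^ k - 1) + k = 2 ^ k - 1 := by
  have hle : tau (2 ^ k - 1) ≤ 2 ^ k - 1 - k :=
    Finset.sup_le fun π _ => Nat.le_sub_of_add_le (sep_add_le_two_pow_sub_one π)
  have hge : sep (extremalPerm k) ≤ tau (2 ^ k - 1) :=
    Finset.le_sup (f := fun π => sep π) (Finset.mem_univ _)
  have := sep_extremalPerm_add k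
  omega

end Extremal

lemma log_two_two_pow_sub_one (k : ℕ) : Nat.log 2 (2 ^ k - 1) = k - 1 := by
  cases k with
  | zero => simp
  | succ k =>
    have := k.two_pow_pos
    apply Nat.log_eq_of_pow_le_of_lt_pow <;> rw [Nat.add_sub_cancel] <;> omega

/-- For `n = 2^k - 1`, there is exactly one permutation of length `n` of
maximal tier `τ(n) = n - 1 - ⌊log₂ n⌋`. -/
theorem unique_max_tier (k : ℕ) (hk : 1 ≤ k) :
    tau (2 ^ k - 1) = (2 ^ k - 1) - 1 - Nat.log 2 (2 ^ k - 1) ∧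
    ∃! π : Equiv.Perm (Fin (2 ^ k - 1)), sep π = tau (2 ^ k - 1) := by
  have htau := tau_two_pow_sub_one_add k
  refine ⟨by rw [log_two_two_pow_sub_one]; omega, extremalPerm k, ?_, fun π hπ => ?_⟩
  · have := sep_extremalPerm_add k
    omega
  · exact eq_of_sep_add (Nat.sub_add_cancel Nat.one_le_two_pow) (hπ ▸ htau)
      (sep_extremalPerm_add k)
end

section
/- If σ is a permutation of length m and τ is a permutation of length k, then the direct sum σ ⊕ τ satisfies sep(σ ⊕ τ) = sep(σ) + sep(τ). -/
/-- direct sum `σ ⊕ τ` of permutations. -/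
def dsum {m k : ℕ} (σ : Equiv.Perm (Fin m)) (τ : Equiv.Perm (Fin k)) :
    Equiv.Perm (Fin (m + k)) :=
  finSumFinEquiv.symm.trans ((Equiv.sumCongr σ τ).trans finSumFinEquiv)

theorem ncard_eq_ncard_preimage_castAdd_add_ncard_preimage_natAdd {m k : ℕ}
    (s : Set (Fin (m + k))) :
    s.ncard = (Fin.castAdd k ⁻¹' s).ncard + (Fin.natAdd m ⁻¹' s).ncard := by
  classical
  simp only [Set.ncard_eq_toFinset_card', Set.toFinset_card, Fintype.card_subtype,
    Finset.card_filter, Fin.sum_univ_add, Set.mem_preimage]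

-- A witness of a separated pair at `v` has all three positions weakly left of the position of `v`,
-- and all three values at least `v`; `h_range` confines exactly such positions to the block `f`.
theorem isSepPair_apply_iff_of_semiconj {n N c : ℕ} {π : Equiv.Perm (Fin n)}
    {ρ : Equiv.Perm (Fin N)} {f : Fin n → Fin N} (h_shift : ∀ i, (f i : ℕ) = c + i)
    (h_semiconj : Function.Semiconj f π ρ) {v : Fin n}
    (h_range : ∀ i ≤ f (π.symm v), f v ≤ ρ i → i ∈ Set.range f) :
    IsSepPair ρ (f v) ↔ IsSepPair π v := by
  have h_lt (i j : Fin n) : f i < f j ↔ i < j := by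
    simp only [Fin.lt_def, h_shift, Nat.add_lt_add_iff_left]
  constructor
  · rintro ⟨p, q, r, hpq, hqr, hp, hq, hr⟩
    obtain rfl : r = f (π.symm v) := by
      rw [← ρ.injective.eq_iff, hr, ← h_semiconj, π.apply_symm_apply]
    obtain ⟨p, rfl⟩ := h_range p (hpq.trans hqr).le (Fin.le_def.2 (by lia))
    obtain ⟨q, rfl⟩ := h_range q hqr.le (Fin.le_def.2 (by lia))
    rw [← h_semiconj, h_shift, h_shift] at hp hq
    exact ⟨p, q, π.symm v, (h_lt p q).1 hpq, (h_lt q _).1 hqr, by lia, by lia,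
      π.apply_symm_apply v⟩
  · rintro ⟨p, q, r, hpq, hqr, hp, hq, rfl⟩
    refine ⟨f p, f q, f r, (h_lt p q).2 hpq, (h_lt q r).2 hqr, ?_, ?_, (h_semiconj r).symm⟩ <;>
      rw [← h_semiconj, h_shift, h_shift] <;> lia

section DirectSum

variable {m k : ℕ} (σ : Equiv.Perm (Fin m)) (τ : Equiv.Perm (Fin k))

theorem dsum_castAdd (i : Fin m) : dsum σ τ (Fin.castAdd k i) = Fin.castAdd k (σ i) := by
  simp [dsum]

theorem dsum_natAdd (i : Fin k) : dsum σ τ (Fin.natAdd m i) = Fin.natAdd m (τ i) := by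
  simp [dsum]

theorem isSepPair_dsum_castAdd (v : Fin m) :
    IsSepPair (dsum σ τ) (Fin.castAdd k v) ↔ IsSepPair σ v := by
  refine isSepPair_apply_iff_of_semiconj (c := 0) (fun i ↦ by simp)
    (fun i ↦ (dsum_castAdd σ τ i).symm) fun i hi _ ↦ ?_
  have hi_lt : (i : ℕ) < m := (Fin.le_def.1 hi).trans_lt (σ.symm v).isLt
  exact ⟨i.castLT hi_lt, Fin.castAdd_castLT k i hi_lt⟩

theorem isSepPair_dsum_natAdd (v : Fin k) :
    IsSepPair (dsum σ τ) (Fin.natAdd m v) ↔ IsSepPair τ v := by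
  refine isSepPair_apply_iff_of_semiconj (Fin.val_natAdd m)
    (fun i ↦ (dsum_natAdd σ τ i).symm) fun i _ hi ↦ ?_
  cases i using Fin.addCases with
  | left i =>
    rw [dsum_castAdd] at hi
    have h_below : Fin.castAdd k (σ i) < Fin.natAdd m v :=
      (σ i).isLt.trans_le (Nat.le_add_right m v)
    exact absurd hi h_below.not_ge
  | right i => exact Set.mem_range_self i

end DirectSum

/-- `sep (σ ⊕ τ) = sep σ + sep τ`. -/
theorem sep_dsum {m k : ℕ} (σ : Equiv.Perm (Fin m)) (τ : Equiv.Perm (Fin k)) :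
    sep (dsum σ τ) = sep σ + sep τ := by
  calc sep (dsum σ τ)
      = {v | IsSepPair (dsum σ τ) (Fin.castAdd k v)}.ncard +
          {v | IsSepPair (dsum σ τ) (Fin.natAdd m v)}.ncard :=
        ncard_eq_ncard_preimage_castAdd_add_ncard_preimage_natAdd _
    _ = sep σ + sep τ := by
        simp only [isSepPair_dsum_castAdd, isSepPair_dsum_natAdd, sep]
end

section
/- Let π be a permutation written as π = σ_1 ⊖ σ_2 ⊖ ⋯ ⊖ σ_p where each σ_i is minus-indecomposable and p ≥ 1, and let r be the number of indices i with 1 ≤ i ≤ p−1 such that σ_i has length one. Then sep(π) = p − r − 1 + Σ_{i=1}^{p} sep(σ_i). -/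
/-- skew sum `σ ⊖ τ` of permutations. -/
def ssum {m k : ℕ} (σ : Equiv.Perm (Fin m)) (τ : Equiv.Perm (Fin k)) :
    Equiv.Perm (Fin (m + k)) :=
  finSumFinEquiv.symm.trans ((Equiv.sumCongr σ τ).trans
    (((Equiv.sumComm (Fin m) (Fin k)).trans finSumFinEquiv).trans
      (finCongr (Nat.add_comm k m))))

/-- a permutation of unspecified length. -/
def PermSig := Σ n : ℕ, Equiv.Perm (Fin n)

/-- a permutation is minus-indecomposable if it is nonempty and is not a skew
sum of two nonempty permutations. -/
def MinusIndec (a : PermSig) : Prop :=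
  a.1 ≠ 0 ∧ ¬ ∃ (m k : ℕ) (σ : Equiv.Perm (Fin m)) (τ : Equiv.Perm (Fin k)),
    m ≠ 0 ∧ k ≠ 0 ∧ a = ⟨m + k, ssum σ τ⟩

/-- iterated (right-nested) skew sum `a ⊖ (b₁ ⊖ (b₂ ⊖ ⋯))`. -/
def skewFold (a : PermSig) : List PermSig → PermSig
  | [] => a
  | b :: rest => ⟨_, ssum a.2 (skewFold b rest).2⟩

/-!
Every value of the top block of `σ ⊖ τ` exceeds every value of the bottom block, and the top block
comes first. A pair of consecutive values inside one block is therefore separated in `σ ⊖ τ` iff it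
is separated in that block. The only other pair consists of the minimum of `σ` followed by the
maximum of `τ`, and what can separate it is precisely an entry of `σ` after its minimum. So each
skew sum contributes one separated pair, unless its first summand ends with its minimum; a
permutation of the form `σ' ⊖ 1` does, and if it is minus-indecomposable then `σ'` is empty.
-/

/-- `IsSepValue π v` says that `(v + 1, v)` is a separated pair of `π`. The value `v` is a natural
number here, so that separated pairs of skew sums can be counted with `Nat.count`. -/
def IsSepValue {n : ℕ} (π : Equiv.Perm (Fin n)) (v : ℕ) : Prop :=
  ∃ p q r : Fin n, p < q ∧ q < r ∧ (π p : ℕ) = v + 1 ∧ v + 1 < (π q : ℕ) ∧ (π r : ℕ) = v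

instance {n : ℕ} (π : Equiv.Perm (Fin n)) : DecidablePred (IsSepValue π) := fun v =>
  inferInstanceAs (Decidable (∃ p q r : Fin n, p < q ∧ q < r ∧
    (π p : ℕ) = v + 1 ∧ v + 1 < (π q : ℕ) ∧ (π r : ℕ) = v))

/-- The last entry of `π` is its least value. This is false for the empty permutation, which has no
last entry. -/
def EndsWithMin {n : ℕ} (π : Equiv.Perm (Fin n)) : Prop :=
  ∃ i : Fin n, (i : ℕ) + 1 = n ∧ (π i : ℕ) = 0

instance {n : ℕ} (π : Equiv.Perm (Fin n)) : Decidable (EndsWithMin π) :=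
  inferInstanceAs (Decidable (∃ i : Fin n, (i : ℕ) + 1 = n ∧ (π i : ℕ) = 0))

theorem sep_eq_count {n : ℕ} (π : Equiv.Perm (Fin n)) : sep π = n.count (IsSepValue π) := by
  have hpair (v : Fin n) : IsSepPair π v ↔ IsSepValue π v := by
    simp only [IsSepPair, IsSepValue, Fin.ext_iff]
  have himage : Fin.val '' {v : Fin n | IsSepPair π v} =
      ({v ∈ Finset.range n | IsSepValue π v} : Finset ℕ) := by
    ext v
    rw [Finset.mem_coe, Finset.mem_filter, Finset.mem_range]
    constructor
    · rintro ⟨w, hw, rfl⟩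
      exact ⟨w.isLt, (hpair w).mp hw⟩
    · rintro ⟨hv, hsep⟩
      exact ⟨⟨v, hv⟩, (hpair ⟨v, hv⟩).mpr hsep, rfl⟩
  rw [sep, ← Set.ncard_image_of_injective _ Fin.val_injective, himage, Set.ncard_coe_finset,
    Nat.count_eq_card_filter_range]

theorem endsWithMin_iff_apply_last {n : ℕ} {π : Equiv.Perm (Fin (n + 1))} :
    EndsWithMin π ↔ π (Fin.last n) = 0 := by
  constructor
  · rintro ⟨i, hi, hπ⟩
    obtain rfl : i = Fin.last n := Fin.ext (Nat.succ.inj hi)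
    exact Fin.ext hπ
  · intro h
    exact ⟨Fin.last n, rfl, congrArg Fin.val h⟩

theorem not_isSepValue_of_le {n v : ℕ} (π : Equiv.Perm (Fin n)) (hv : n ≤ v + 1) :
    ¬ IsSepValue π v := by
  rintro ⟨p, -, -, -, -, hp, -, -⟩
  exact absurd (π p).isLt (by omega)

section SkewSum

variable {m k : ℕ} (σ : Equiv.Perm (Fin m)) (τ : Equiv.Perm (Fin k))

@[simp]
theorem val_ssum_castAdd (i : Fin m) : (ssum σ τ (Fin.castAdd k i) : ℕ) = k + σ i := by
  simp [ssum, Nat.add_comm]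

@[simp]
theorem val_ssum_natAdd (i : Fin k) : (ssum σ τ (Fin.natAdd m i) : ℕ) = τ i := by
  simp [ssum]

theorem exists_castAdd_of_le_ssum {i : Fin (m + k)} (hi : k ≤ (ssum σ τ i : ℕ)) :
    ∃ j : Fin m, Fin.castAdd k j = i := by
  induction i using Fin.addCases with
  | left j => exact ⟨j, rfl⟩
  | right j => exact absurd hi (by simp)

theorem exists_natAdd_of_ssum_lt {i : Fin (m + k)} (hi : (ssum σ τ i : ℕ) < k) :
    ∃ j : Fin k, Fin.natAdd m j = i := by
  induction i using Fin.addCases with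
  | left j => exact absurd hi (by simp)
  | right j => exact ⟨j, rfl⟩

theorem exists_natAdd_of_natAdd_lt {p : Fin k} {q : Fin (m + k)} (hpq : Fin.natAdd m p < q) :
    ∃ j : Fin k, Fin.natAdd m j = q := by
  induction q using Fin.addCases with
  | left j =>
    rw [Fin.lt_def, Fin.val_natAdd, Fin.val_castAdd] at hpq
    omega
  | right j => exact ⟨j, rfl⟩

theorem isSepValue_ssum_add (v : ℕ) : IsSepValue (ssum σ τ) (k + v) ↔ IsSepValue σ v := by
  constructor
  · rintro ⟨p, q, r, hpq, hqr, hp, hq, hr⟩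
    obtain ⟨p, rfl⟩ := exists_castAdd_of_le_ssum σ τ (i := p) (by omega)
    obtain ⟨q, rfl⟩ := exists_castAdd_of_le_ssum σ τ (i := q) (by omega)
    obtain ⟨r, rfl⟩ := exists_castAdd_of_le_ssum σ τ (i := r) (by omega)
    simp only [val_ssum_castAdd] at hp hq hr
    exact ⟨p, q, r, hpq, hqr, by omega, by omega, by omega⟩
  · rintro ⟨p, q, r, hpq, hqr, hp, hq, hr⟩
    exact ⟨p.castAdd k, q.castAdd k, r.castAdd k, hpq, hqr,
      by simp [hp, add_assoc], by simp [add_assoc, hq], by simp [hr]⟩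

theorem isSepValue_ssum_of_lt {v : ℕ} (hv : v + 1 < k) :
    IsSepValue (ssum σ τ) v ↔ IsSepValue τ v := by
  constructor
  · rintro ⟨p, q, r, hpq, hqr, hp, hq, hr⟩
    obtain ⟨p, rfl⟩ := exists_natAdd_of_ssum_lt σ τ (i := p) (by omega)
    obtain ⟨q, rfl⟩ := exists_natAdd_of_natAdd_lt hpq
    obtain ⟨r, rfl⟩ := exists_natAdd_of_natAdd_lt hqr
    simp only [val_ssum_natAdd, Fin.natAdd_lt_natAdd_iff] at hpq hqr hp hq hr
    exact ⟨p, q, r, hpq, hqr, hp, hq, hr⟩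
  · rintro ⟨p, q, r, hpq, hqr, hp, hq, hr⟩
    exact ⟨p.natAdd m, q.natAdd m, r.natAdd m, by simpa using hpq, by simpa using hqr,
      by simpa using hp, by simpa using hq, by simpa using hr⟩

end SkewSum

theorem isSepValue_ssum_junction {m k : ℕ} (σ : Equiv.Perm (Fin (m + 1)))
    (τ : Equiv.Perm (Fin (k + 1))) :
    IsSepValue (ssum σ τ) k ↔ ¬ EndsWithMin σ := by
  rw [endsWithMin_iff_apply_last]
  constructor
  · rintro ⟨p, q, r, hpq, -, hp, hq, -⟩ hlast
    obtain ⟨p, rfl⟩ := exists_castAdd_of_le_ssum σ τ (i := p) hp.ge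
    obtain ⟨q, rfl⟩ := exists_castAdd_of_le_ssum σ τ (i := q) hq.le
    have hp_min : σ p = 0 := Fin.ext (by simpa using hp)
    obtain rfl : p = Fin.last m := σ.injective (hp_min.trans hlast.symm)
    exact (Fin.le_last q).not_gt hpq
  · intro hlast
    have hmin_lt : σ.symm 0 < Fin.last m :=
      Fin.lt_last_iff_ne_last.mpr fun h => hlast (by rw [← h, Equiv.apply_symm_apply])
    refine ⟨(σ.symm 0).castAdd (k + 1), (Fin.last m).castAdd (k + 1),
      (τ.symm (Fin.last k)).natAdd (m + 1), hmin_lt, ?_, by simp, ?_, by simp⟩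
    · rw [Fin.lt_def, Fin.val_castAdd, Fin.val_natAdd, Fin.val_last]
      omega
    · simpa using Fin.pos_iff_ne_zero.mpr hlast

theorem sep_ssum {m k : ℕ} (σ : Equiv.Perm (Fin m)) (τ : Equiv.Perm (Fin k))
    (hm : m ≠ 0) (hk : k ≠ 0) :
    sep (ssum σ τ) = (if EndsWithMin σ then 0 else 1) + sep σ + sep τ := by
  obtain ⟨m, rfl⟩ := Nat.exists_eq_succ_of_ne_zero hm
  obtain ⟨k, rfl⟩ := Nat.exists_eq_succ_of_ne_zero hk
  have hlow : k.count (IsSepValue (ssum σ τ)) = k.count (IsSepValue τ) := by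
    simp only [Nat.count_eq_card_filter_range]
    refine congrArg Finset.card (Finset.filter_congr fun v hv => ?_)
    exact isSepValue_ssum_of_lt σ τ (Nat.succ_lt_succ (Finset.mem_range.mp hv))
  have htop : ¬ IsSepValue τ k := not_isSepValue_of_le τ le_rfl
  calc sep (ssum σ τ)
      = (k + 1 + (m + 1)).count (IsSepValue (ssum σ τ)) := by rw [sep_eq_count, add_comm (k + 1)]
    _ = k.count (IsSepValue τ) + (if EndsWithMin σ then 0 else 1) +
          (m + 1).count (IsSepValue σ) := by
        simp only [Nat.count_add, Nat.count_succ _ k, hlow, isSepValue_ssum_junction,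
          isSepValue_ssum_add, ite_not]
    _ = (if EndsWithMin σ then 0 else 1) + sep σ + sep τ := by
        rw [sep_eq_count σ, sep_eq_count τ, Nat.count_succ _ k, if_neg htop]
        ring

theorem EndsWithMin.exists_eq_ssum_one {n : ℕ} {π : Equiv.Perm (Fin (n + 1))}
    (h : EndsWithMin π) :
    ∃ σ : Equiv.Perm (Fin n), π = ssum σ (1 : Equiv.Perm (Fin 1)) := by
  have hlast : π (Fin.last n) = 0 := endsWithMin_iff_apply_last.mp h
  have hne_zero (i : Fin (n + 1)) : i ≠ Fin.last n ↔ π i ≠ 0 := by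
    rw [← hlast, π.injective.ne_iff]
  let σ : Equiv.Perm (Fin n) := (finSuccAboveEquiv (Fin.last n)).trans
    ((π.subtypeEquiv hne_zero).trans (finSuccAboveEquiv 0).symm)
  have hσ (i : Fin n) : (σ i).succ = π i.castSucc :=
    calc (σ i).succ = finSuccAboveEquiv 0 (σ i) := by simp [finSuccAboveEquiv_apply]
      _ = π i.castSucc := by simp [σ, finSuccAboveEquiv_apply]
  refine ⟨σ, Equiv.ext fun i => Fin.ext ?_⟩
  induction i using Fin.addCases with
  | left i =>
    rw [val_ssum_castAdd, add_comm 1 (σ i : ℕ), ← Fin.val_succ, hσ]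
    rfl
  | right i =>
    rw [val_ssum_natAdd, Fin.fin_one_eq_zero i]
    exact congrArg Fin.val hlast

theorem MinusIndec.endsWithMin_iff {b : PermSig} (hb : MinusIndec b) :
    EndsWithMin b.2 ↔ b.1 = 1 := by
  obtain ⟨_ | n, π⟩ := b
  · exact absurd rfl hb.1
  constructor
  · intro h
    obtain ⟨σ, rfl⟩ := h.exists_eq_ssum_one
    by_contra hn
    exact hb.2 ⟨n, 1, σ, 1, fun h0 => hn (congrArg (· + 1) h0), one_ne_zero, rfl⟩
  · intro hn
    obtain rfl : n = 0 := Nat.succ.inj hn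
    exact endsWithMin_iff_apply_last.mpr (Fin.fin_one_eq_zero _)

theorem skewFold_fst_ne_zero {a : PermSig} (L : List PermSig) (ha : a.1 ≠ 0) :
    (skewFold a L).1 ≠ 0 := by
  cases L with
  | nil => exact ha
  | cons b L => exact fun h => ha (Nat.eq_zero_of_add_eq_zero_right h)

theorem length_sub_length_filter_dropLast_sub_one {α : Type*} (p : α → Bool) (L : List α) :
    L.length - (L.dropLast.filter p).length - 1 = L.dropLast.countP (fun x => ¬ p x) := by
  have hsplit := L.dropLast.length_eq_countP_add_countP p
  rw [List.length_dropLast] at hsplit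
  rw [← List.countP_eq_length_filter]
  omega

theorem sep_skew_decomposition_general (a : PermSig) (L : List PermSig)
    (h : ∀ b ∈ a :: L, b.1 ≠ 0) :
    sep (skewFold a L).2 =
      (a :: L).dropLast.countP (fun b => ¬ EndsWithMin b.2)
        + ((a :: L).map (fun b => sep b.2)).sum := by
  induction L generalizing a with
  | nil => simp [skewFold]
  | cons b L ih =>
    obtain ⟨ha, hL⟩ := List.forall_mem_cons.mp h
    have hsum : sep (skewFold a (b :: L)).2 =
        (if EndsWithMin a.2 then 0 else 1) + sep a.2 + sep (skewFold b L).2 :=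
      sep_ssum a.2 _ ha (skewFold_fst_ne_zero L (hL b List.mem_cons_self))
    rw [hsum, ih b hL, List.dropLast_cons_cons, List.countP_cons, List.map_cons (l := b :: L),
      List.sum_cons]
    simp only [decide_eq_true_eq, ite_not]
    ring

/-- If `π = σ₁ ⊖ σ₂ ⊖ ⋯ ⊖ σ_p` with each `σᵢ` minus-indecomposable, and `r`
is the number of `σᵢ` with `i < p` of length one, then
`sep π = p - r - 1 + ∑ᵢ sep σᵢ`. -/
theorem sep_skew_decomposition (a : PermSig) (L : List PermSig)
    (h : ∀ b ∈ a :: L, MinusIndec b) :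
    sep (skewFold a L).2 =
      (a :: L).length - (((a :: L).dropLast.filter (fun b => b.1 == 1)).length) - 1
        + ((a :: L).map (fun b => sep b.2)).sum := by
  rw [sep_skew_decomposition_general a L fun b hb => (h b hb).1,
    length_sub_length_filter_dropLast_sub_one]
  congr 1
  refine List.countP_congr fun b hb => ?_
  simp [(h b (List.mem_of_mem_dropLast hb)).endsWithMin_iff]
end

section
/- For every positive integer n and every integer t ≥ 0, the number of permutations of length n with exactly t separated pairs equals T(n,t), the number of Parker sequences of length n with exactly t descents; i.e. #{π ∈ S_n : sep(π) = t} = #{(a_1,…,a_n) : 1 ≤ a_i ≤ i for all i, and exactly t indices i ∈ {1,…,n−1} satisfy a_i > a_{i+1}}. -/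
open Finset

lemma equiv_eq_of_lt_imp_lt {α β : Type*} [LinearOrder β] [WellFoundedLT β] {σ τ : α ≃ β}
    (h : ∀ a b, σ a < σ b → τ a < τ b) : σ = τ := by
  have hmono : StrictMono (σ.symm.trans τ) := fun x y hxy ↦
    h (σ.symm x) (σ.symm y) (by simpa only [Equiv.apply_symm_apply] using hxy)
  let e : β ≃o β := hmono.orderIsoOfSurjective _ (σ.symm.trans τ).surjective
  have he : e = OrderIso.refl β := Subsingleton.elim _ _
  ext a
  simpa [e] using (DFunLike.congr_fun he (σ a)).symm

section InversionTable

variable {α β γ : Type*} [LinearOrder α] [LocallyFiniteOrderBot α] [LinearOrder β] [LinearOrder γ]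
  {f : α → β} {g : α → γ} {a b : α}

/-- The inversions of `f` whose right end is `a`, each given by its left end. -/
def inversionsEndingAt (f : α → β) (a : α) : Finset α := {b ∈ Iio a | f a < f b}

/-- The inversion table of `f`: it counts, at each `a`, the inversions of `f` with right end `a`. -/
def inversionTable (f : α → β) (a : α) : ℕ := #(inversionsEndingAt f a)

lemma mem_inversionsEndingAt : b ∈ inversionsEndingAt f a ↔ b < a ∧ f a < f b := by
  simp only [inversionsEndingAt, mem_filter, mem_Iio]

lemma lt_iff_lt_of_inversionsEndingAt_eq (hf : f.Injective) (hg : g.Injective)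
    (ha : inversionsEndingAt f a = inversionsEndingAt g a)
    (hb : inversionsEndingAt f b = inversionsEndingAt g b) : f a < f b ↔ g a < g b := by
  have lt_iff_of_lt {x y : α} (hxy : x < y)
      (hy : inversionsEndingAt f y = inversionsEndingAt g y) : f y < f x ↔ g y < g x := by
    simpa only [mem_inversionsEndingAt, hxy, true_and] using Finset.ext_iff.1 hy x
  rcases lt_trichotomy a b with hab | rfl | hba
  · rw [← (hf.ne hab.ne).le_iff_lt, ← (hg.ne hab.ne).le_iff_lt, ← not_lt, ← not_lt,
      lt_iff_of_lt hab hb]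
  · simp only [lt_irrefl]
  · exact lt_iff_of_lt hba ha

/-- The inversions ending at `a` form an upper set for the order that the values of `f` induce on
the elements below `a`; two upper sets of the same linear order are comparable. -/
lemma inversionsEndingAt_subset_total (hf : f.Injective) (hg : g.Injective)
    (h : ∀ b < a, inversionsEndingAt f b = inversionsEndingAt g b) :
    inversionsEndingAt f a ⊆ inversionsEndingAt g a ∨
      inversionsEndingAt g a ⊆ inversionsEndingAt f a := by
  by_contra! hne
  obtain ⟨x, hxf, hxg⟩ := not_subset.1 hne.1
  obtain ⟨y, hyg, hyf⟩ := not_subset.1 hne.2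
  simp only [mem_inversionsEndingAt, not_and, not_lt] at hxf hxg hyg hyf
  have hf_lt : f y < f x := (hyf hyg.1).trans_lt hxf.2
  have hg_lt : g x < g y := (hxg hxf.1).trans_lt hyg.2
  have hiff := lt_iff_lt_of_inversionsEndingAt_eq hf hg (h y hyg.1) (h x hxf.1)
  exact hg_lt.asymm (hiff.1 hf_lt)

lemma inversionsEndingAt_eq_of_inversionTable_eq (hf : f.Injective) (hg : g.Injective)
    (h : inversionTable f = inversionTable g) (a : α) :
    inversionsEndingAt f a = inversionsEndingAt g a := by
  induction hk : #(Iio a) using Nat.strong_induction_on generalizing a with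
  | h k ih =>
    have ih' (b : α) (hba : b < a) : inversionsEndingAt f b = inversionsEndingAt g b :=
      ih _ (hk ▸ card_lt_card (Iio_ssubset_Iio hba)) b rfl
    have hcard : #(inversionsEndingAt f a) = #(inversionsEndingAt g a) := congrFun h a
    rcases inversionsEndingAt_subset_total hf hg ih' with hsub | hsub
    · exact eq_of_subset_of_card_le hsub hcard.ge
    · exact (eq_of_subset_of_card_le hsub hcard.le).symm

lemma inversionTable_equiv_injective [WellFoundedLT β] :
    Function.Injective fun σ : α ≃ β ↦ inversionTable σ := fun σ τ h ↦
  have hinv := inversionsEndingAt_eq_of_inversionTable_eq σ.injective τ.injective h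
  equiv_eq_of_lt_imp_lt fun a b ↦
    (lt_iff_lt_of_inversionsEndingAt_eq σ.injective τ.injective (hinv a) (hinv b)).1

lemma inversionTable_lt_iff_of_covBy (hf : f.Injective) (hab : a ⋖ b) :
    inversionTable f b < inversionTable f a ↔ ∃ c < a, f a < f c ∧ f c < f b := by
  simp only [inversionTable]
  rcases le_or_gt (f b) (f a) with hba | hfab
  · have hsub : inversionsEndingAt f a ⊆ inversionsEndingAt f b := fun c hc ↦ by
      rw [mem_inversionsEndingAt] at hc ⊢
      exact ⟨hc.1.trans hab.lt, hba.trans_lt hc.2⟩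
    exact iff_of_false (card_le_card hsub).not_gt
      fun ⟨_, _, hac, hcb⟩ ↦ (hac.trans hcb).not_ge hba
  · have hsub : inversionsEndingAt f b ⊆ inversionsEndingAt f a := fun c hc ↦ by
      rw [mem_inversionsEndingAt] at hc ⊢
      have hca : c ≠ a := fun h ↦ (h ▸ hc.2).asymm hfab
      exact ⟨(hab.le_of_lt hc.1).lt_of_ne hca, hfab.trans hc.2⟩
    constructor
    · intro hcard
      obtain ⟨c, hc, hcb⟩ := exists_mem_notMem_of_card_lt_card hcard
      rw [mem_inversionsEndingAt] at hc hcb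
      have hle : f c ≤ f b := not_lt.1 fun h ↦ hcb ⟨hc.1.trans hab.lt, h⟩
      exact ⟨c, hc.1, hc.2, hle.lt_of_ne (hf.ne (hc.1.trans hab.lt).ne)⟩
    · rintro ⟨c, hca, hac, hcb⟩
      refine card_lt_card ((ssubset_iff_of_subset hsub).2 ⟨c, ?_, ?_⟩)
      · exact mem_inversionsEndingAt.2 ⟨hca, hac⟩
      · exact fun h ↦ hcb.asymm (mem_inversionsEndingAt.1 h).2

end InversionTable

lemma ncard_covBy_left_eq_ncard_covBy_right {α : Type*} [LinearOrder α] (r : α → α → Prop) :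
    {a | ∃ b, a ⋖ b ∧ r a b}.ncard = {b | ∃ a, a ⋖ b ∧ r a b}.ncard := by
  let pairs : Set (α × α) := {p | p.1 ⋖ p.2 ∧ r p.1 p.2}
  have hfst : {a | ∃ b, a ⋖ b ∧ r a b} = Prod.fst '' pairs := by ext; simp [pairs]
  have hsnd : {b | ∃ a, a ⋖ b ∧ r a b} = Prod.snd '' pairs := by ext; simp [pairs]
  have hfst_inj : Set.InjOn Prod.fst pairs := by
    rintro ⟨a, b⟩ hb ⟨_, c⟩ hc rfl
    exact Prod.ext rfl (hb.1.unique_right hc.1)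
  have hsnd_inj : Set.InjOn Prod.snd pairs := by
    rintro ⟨a, c⟩ ha ⟨b, _⟩ hb rfl
    exact Prod.ext (ha.1.unique_left hb.1) rfl
  rw [hfst, hsnd, hfst_inj.ncard_image, hsnd_inj.ncard_image]

section Parker

variable {n : ℕ}

/-- The Parker sequences of length `n`; the entry at the `0`-based index `i` is at most `i + 1`. -/
def parkerSequences (n : ℕ) : Finset (Fin n → ℕ) := Fintype.piFinset fun i ↦ Icc 1 (i + 1)

/-- The descents of a sequence, as `0`-based indices. -/
def descents {α : Type*} [LT α] (a : Fin n → α) : Set (Fin n) :=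
  {i | ∃ h : (i : ℕ) + 1 < n, a i > a ⟨(i : ℕ) + 1, h⟩}

/-- The Parker sequence encoding `π`: the inversion table, shifted by `1`, of the map taking `i` to
the position in `π` of the value `n - 1 - i`. -/
def parkerCode (π : Equiv.Perm (Fin n)) (i : Fin n) : ℕ :=
  inversionTable (Fin.revPerm.trans π.symm) i + 1

lemma mem_parkerSequences {a : Fin n → ℕ} :
    a ∈ parkerSequences n ↔ ∀ i : Fin n, 1 ≤ a i ∧ a i ≤ (i : ℕ) + 1 := by
  simp only [parkerSequences, Fintype.mem_piFinset, mem_Icc]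

lemma card_parkerSequences (n : ℕ) : #(parkerSequences n) = n.factorial := by
  simp only [parkerSequences, Fintype.card_piFinset, Nat.card_Icc, Nat.add_sub_cancel]
  rw [Fin.prod_univ_eq_prod_range (· + 1) n, prod_range_add_one_eq_factorial]

lemma parkerCode_mem_parkerSequences (π : Equiv.Perm (Fin n)) :
    parkerCode π ∈ parkerSequences n := by
  refine mem_parkerSequences.2 fun i ↦ ⟨Nat.le_add_left _ _, Nat.succ_le_succ ?_⟩
  exact (card_filter_le _ _).trans (Fin.card_Iio i).le

lemma parkerCode_injective : Function.Injective (parkerCode (n := n)) := by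
  intro π ρ h
  have htable : inversionTable (Fin.revPerm.trans π.symm) =
      inversionTable (Fin.revPerm.trans ρ.symm) :=
    funext fun i ↦ Nat.succ_injective (congrFun h i)
  have htrans : Fin.revPerm.trans π.symm = Fin.revPerm.trans ρ.symm :=
    inversionTable_equiv_injective htable
  have hsymm : π.symm = ρ.symm :=
    Equiv.ext fun v ↦ by simpa using DFunLike.congr_fun htrans v.rev
  exact Equiv.symm_bijective.injective hsymm

lemma range_parkerCode (n : ℕ) : Set.range (parkerCode (n := n)) = parkerSequences n := by
  have himage : univ.image (parkerCode (n := n)) = parkerSequences n := by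
    refine eq_of_subset_of_card_le
      (image_subset_iff.2 fun π _ ↦ parkerCode_mem_parkerSequences π) ?_
    rw [card_image_of_injective _ parkerCode_injective, card_univ, Fintype.card_perm,
      Fintype.card_fin, card_parkerSequences]
  rw [← himage, coe_image, coe_univ, Set.image_univ]

lemma mem_descents_iff_exists_covBy {α : Type*} [LT α] {a : Fin n → α} {i : Fin n} :
    i ∈ descents a ↔ ∃ j, i ⋖ j ∧ a j < a i := by
  simp only [descents, Set.mem_ofPred_eq, Fin.covBy_iff, Nat.covBy_iff_add_one_eq]
  constructor
  · rintro ⟨h, hlt⟩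
    exact ⟨_, rfl, hlt⟩
  · rintro ⟨j, hij, hlt⟩
    exact ⟨hij ▸ j.isLt, by simpa only [hij] using hlt⟩

lemma isSepPair_iff_exists_covBy {π : Equiv.Perm (Fin n)} {v : Fin n} :
    IsSepPair π v ↔
      ∃ u, v ⋖ u ∧ ∃ w, u < w ∧ π.symm u < π.symm w ∧ π.symm w < π.symm v := by
  simp only [Fin.covBy_iff, Nat.covBy_iff_add_one_eq]
  constructor
  · rintro ⟨p, q, r, hpq, hqr, hp, hq, rfl⟩
    exact ⟨π p, hp.symm, π q, Fin.lt_def.2 (hp ▸ hq), by simpa using hpq, by simpa using hqr⟩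
  · rintro ⟨u, hvu, w, huw, hpq, hqr⟩
    exact ⟨π.symm u, π.symm w, π.symm v, hpq, hqr, by simp [hvu], by simpa [hvu] using huw,
      π.apply_symm_apply v⟩

lemma isSepPair_rev_iff_exists_covBy {π : Equiv.Perm (Fin n)} {j : Fin n} :
    IsSepPair π j.rev ↔ ∃ i, i ⋖ j ∧ parkerCode π j < parkerCode π i := by
  have hcovBy (i : Fin n) : j.rev ⋖ i.rev ↔ i ⋖ j :=
    (apply_covBy_apply_iff Fin.revOrderIso).trans toDual_covBy_toDual_iff
  rw [isSepPair_iff_exists_covBy, Fin.rev_surjective.exists]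
  refine exists_congr fun i ↦ (and_congr_left' (hcovBy i)).trans (and_congr_right fun hij ↦ ?_)
  rw [parkerCode, parkerCode, Nat.add_lt_add_iff_right,
    inversionTable_lt_iff_of_covBy (Equiv.injective _) hij, Fin.rev_surjective.exists]
  simp only [Fin.rev_lt_rev, Equiv.trans_apply, Fin.revPerm_apply]

lemma ncard_descents_parkerCode (π : Equiv.Perm (Fin n)) :
    (descents (parkerCode π)).ncard = sep π := by
  calc (descents (parkerCode π)).ncard
      = {i | ∃ j, i ⋖ j ∧ parkerCode π j < parkerCode π i}.ncard := by
        simp only [← mem_descents_iff_exists_covBy, Set.ofPred_mem_eq]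
    _ = {j | ∃ i, i ⋖ j ∧ parkerCode π j < parkerCode π i}.ncard :=
        ncard_covBy_left_eq_ncard_covBy_right _
    _ = (Fin.rev ⁻¹' {v | IsSepPair π v}).ncard := by
        simp only [← isSepPair_rev_iff_exists_covBy, Set.preimage_ofPred_eq]
    _ = sep π := Set.ncard_preimage_of_injective_subset_range Fin.rev_injective
        (by simp [Fin.rev_surjective.range_eq])

end Parker

/-- The number of permutations of length `n` with exactly `t` separated pairs
equals the number of Parker sequences `(a₁,…,aₙ)` (with `1 ≤ aᵢ ≤ i`) having
exactly `t` descents (indices `i ∈ {1,…,n-1}` with `aᵢ > aᵢ₊₁`).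
Here `a : Fin n → ℕ` is `0`-indexed, so `a i` is `a_{i+1}`. -/
theorem card_sep_eq_parker (n t : ℕ) (hn : 1 ≤ n) :
    Nat.card {π : Equiv.Perm (Fin n) // sep π = t} =
      Nat.card {a : Fin n → ℕ //
        (∀ i : Fin n, 1 ≤ a i ∧ a i ≤ (i : ℕ) + 1) ∧
        {i : Fin n | ∃ h : (i : ℕ) + 1 < n, a i > a ⟨(i : ℕ) + 1, h⟩}.ncard = t} := by
  have hcodes : parkerCode '' {π : Equiv.Perm (Fin n) | sep π = t} =
      {a | (∀ i : Fin n, 1 ≤ a i ∧ a i ≤ (i : ℕ) + 1) ∧ (descents a).ncard = t} := by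
    ext a
    simp only [← mem_parkerSequences, ← mem_coe, ← range_parkerCode, ← ncard_descents_parkerCode]
    constructor
    · rintro ⟨π, hπ, rfl⟩
      exact ⟨⟨π, rfl⟩, hπ⟩
    · rintro ⟨⟨π, rfl⟩, hπ⟩
      exact ⟨π, hπ, rfl⟩
  calc Nat.card {π : Equiv.Perm (Fin n) // sep π = t}
      = Nat.card (parkerCode '' {π : Equiv.Perm (Fin n) | sep π = t}) :=
        (Nat.card_image_of_injective parkerCode_injective _).symm
    _ = _ := by rw [hcodes]; rfl
end

section
/- For all integers n ≥ 1, t ≥ 0 and 1 ≤ k ≤ n+1, the counts P satisfy the recurrence P(n+1, t, k) = Σ_{j=k−1}^{n} P(n, t, j) + Σ_{j=1}^{k−2} P(n, t−1, j), where terms P(n, t−1, j) are interpreted as 0 when t = 0 and the first sum starts at j = max(k−1, 1). -/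
/-- `P n t k` is the number of permutations of length `n` with exactly `t`
separated pairs whose `1` is in the `k`-th position (1-based; so 0-based the
entry at index `k - 1` is the value `0`). -/
noncomputable def P (n t k : ℕ) : ℕ :=
  Nat.card {π : Equiv.Perm (Fin n) //
    sep π = t ∧ ∃ h : k - 1 < n, (π ⟨k - 1, h⟩ : ℕ) = 0}

/-!
Deleting the entry `1` of a permutation of length `n + 1` and lowering the other entries by one is a
bijection onto the permutations of length `n`, once the position `k` of the deleted entry is fixed.
The pairs `(i + 1, i)` with `i ≥ 2` keep their status, because an entry `1` is neither part of such
a pair nor large enough to separate it. The remaining pair `(2, 1)` is separated exactly when `2`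
stands at a position `≤ k - 2`: any entry strictly between the two exceeds `2`. As `2` becomes the
`1` of the shorter permutation, the deletion lowers `sep` by one if that `1` is at a position
`≤ k - 2`, and preserves it otherwise.
-/

open Equiv Finset

section

variable {n : ℕ}

/-- Insertion of the entry `v` at position `p` of the one-line notation of a permutation, the
entries `≥ v` being raised by one first. It is packaged as a bijection, the inverse of deleting
position `p`; positions and entries are counted from `0`. -/
def insertEntry (p v : Fin (n + 1)) : Perm (Fin n) ≃ {π : Perm (Fin (n + 1)) // π p = v} :=
  (((Equiv.refl _).equivCongr (finSuccAboveEquiv v)).trans (optionSubtype v).symm).trans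
    (((finSuccEquiv' p).symm.equivCongr (Equiv.refl _)).subtypeEquiv fun e ↦ by simp)

lemma insertEntry_apply_self (p v : Fin (n + 1)) (σ : Perm (Fin n)) :
    (insertEntry p v σ).1 p = v :=
  (insertEntry p v σ).2

lemma insertEntry_apply_succAbove (p v : Fin (n + 1)) (σ : Perm (Fin n)) (x : Fin n) :
    (insertEntry p v σ).1 (p.succAbove x) = v.succAbove (σ x) := by
  simp [insertEntry, finSuccAboveEquiv_apply]

lemma isSepPair_insertEntry_succ (p : Fin (n + 1)) (σ : Perm (Fin n)) (v : Fin n) :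
    IsSepPair (insertEntry p 0 σ).1 v.succ ↔ IsSepPair σ v := by
  simp [IsSepPair, Fin.exists_iff_succAbove p, insertEntry_apply_self, insertEntry_apply_succAbove,
    (Fin.succ_ne_zero v).symm]

lemma isSepPair_zero_iff (π : Perm (Fin (n + 2))) :
    IsSepPair π 0 ↔ (π.symm 1 : ℕ) + 1 < π.symm 0 := by
  constructor
  · rintro ⟨p, q, r, hpq, hqr, hp, -, hr⟩
    obtain rfl : π.symm 1 = p := by rw [symm_apply_eq]; ext; simp [hp]
    obtain rfl : π.symm 0 = r := by rw [symm_apply_eq, hr]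
    omega
  · intro h
    obtain ⟨q, hq⟩ : ∃ q : Fin (n + 2), (q : ℕ) = π.symm 1 + 1 := ⟨⟨_, by omega⟩, rfl⟩
    have hq0 : π q ≠ 0 := by rw [Ne, ← eq_symm_apply]; omega
    have hq1 : π q ≠ 1 := by rw [Ne, ← eq_symm_apply]; omega
    refine ⟨π.symm 1, q, π.symm 0, by omega, by omega, by simp, ?_, by simp⟩
    simp only [Ne, Fin.ext_iff, Fin.val_zero, Fin.val_one] at hq0 hq1 ⊢
    omega

/-- The position of the entry `1` in one-line notation, counted from `1` as in `P`. -/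
def posOne (σ : Perm (Fin (n + 1))) : ℕ := σ.symm 0 + 1

lemma posOne_mem_Icc (σ : Perm (Fin (n + 1))) : posOne σ ∈ Icc 1 (n + 1) := by
  simp only [posOne, mem_Icc]
  omega

lemma posOne_eq_iff (σ : Perm (Fin (n + 1))) {j : ℕ} (hj : j ≠ 0) :
    posOne σ = j ↔ ∃ h : j - 1 < n + 1, (σ ⟨j - 1, h⟩ : ℕ) = 0 := by
  simp only [Fin.val_eq_zero_iff, ← eq_symm_apply, Fin.ext_iff, posOne, exists_prop]
  omega

lemma isSepPair_insertEntry_zero (p : Fin (n + 2)) (σ : Perm (Fin (n + 1))) :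
    IsSepPair (insertEntry p 0 σ).1 0 ↔ posOne σ < p := by
  have h0 : (insertEntry p 0 σ).1.symm 0 = p := by
    rw [symm_apply_eq, insertEntry_apply_self]
  have h1 : (insertEntry p 0 σ).1.symm 1 = p.succAbove (σ.symm 0) := by
    simp [symm_apply_eq, insertEntry_apply_succAbove]
  rw [isSepPair_zero_iff, h0, h1, posOne]
  obtain h | h := lt_or_ge (σ.symm 0).castSucc p
  · rw [Fin.succAbove_of_castSucc_lt _ _ h, Fin.val_castSucc]
  · rw [Fin.succAbove_of_le_castSucc _ _ h, Fin.val_succ]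
    rw [Fin.le_def, Fin.val_castSucc] at h
    omega

lemma sep_insertEntry (p : Fin (n + 2)) (σ : Perm (Fin (n + 1))) :
    sep (insertEntry p 0 σ).1 = sep σ + if posOne σ < p then 1 else 0 := by
  classical
  simp only [sep, Set.ncard_eq_toFinset_card', Set.toFinset_ofPred]
  rw [Fin.card_filter_univ_succ', add_comm]
  simp only [isSepPair_insertEntry_succ, isSepPair_insertEntry_zero]

lemma P_eq_natCard (t : ℕ) (p : Fin (n + 1)) :
    P (n + 1) t (p + 1) = Nat.card {π : Perm (Fin (n + 1)) // π p = 0 ∧ sep π = t} := by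
  simp [P, and_comm, p.is_le]

lemma P_eq_card_posOne (t : ℕ) {j : ℕ} (hj : j ≠ 0) :
    P (n + 1) t j = #{σ : Perm (Fin (n + 1)) | sep σ = t ∧ posOne σ = j} := by
  simp only [P, posOne_eq_iff _ hj, Nat.card_eq_fintype_card, Fintype.card_subtype]

lemma sum_P_eq_card (t : ℕ) {s : Finset ℕ} (hs : 0 ∉ s) :
    ∑ j ∈ s, P (n + 1) t j = #{σ : Perm (Fin (n + 1)) | sep σ = t ∧ posOne σ ∈ s} := by
  rw [← filter_filter, ← sum_card_fiberwise_eq_card_filter]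
  refine sum_congr rfl fun j hj ↦ ?_
  rw [P_eq_card_posOne t (ne_of_mem_of_not_mem hj hs), filter_filter]

lemma P_eq_card_sep_add (t : ℕ) (p : Fin (n + 2)) :
    P (n + 2) t (p + 1) =
      #{σ : Perm (Fin (n + 1)) | sep σ + (if posOne σ < p then 1 else 0) = t} := by
  calc
    _ = Nat.card {π : {π : Perm (Fin (n + 2)) // π p = 0} // sep π.1 = t} := by
      rw [P_eq_natCard]
      exact Nat.card_congr (subtypeSubtypeEquivSubtypeInter _ _).symm
    _ = Nat.card {σ : Perm (Fin (n + 1)) // sep (insertEntry p 0 σ).1 = t} :=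
      Nat.card_congr ((insertEntry p 0).subtypeEquiv fun _ ↦ Iff.rfl).symm
    _ = _ := by simp only [sep_insertEntry, Nat.card_eq_fintype_card, Fintype.card_subtype]

lemma P_eq_card_add_card (t : ℕ) (p : Fin (n + 2)) :
    P (n + 2) t (p + 1) =
      #{σ : Perm (Fin (n + 1)) | sep σ = t ∧ p ≤ posOne σ} +
        #{σ : Perm (Fin (n + 1)) | sep σ + 1 = t ∧ posOne σ < p} := by
  rw [P_eq_card_sep_add, ← card_filter_add_card_filter_not fun σ ↦ p ≤ posOne σ,
    filter_filter, filter_filter]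
  congr 2 <;> ext σ <;> grind

end

/-- The recurrence
`P(n+1, t, k) = ∑_{j=max(k-1,1)}^{n} P(n, t, j) + ∑_{j=1}^{k-2} P(n, t-1, j)`,
where the second sum is interpreted as `0` when `t = 0`. -/
theorem P_recurrence (n t k : ℕ) (hn : 1 ≤ n) (hk1 : 1 ≤ k) (hk2 : k ≤ n + 1) :
    P (n + 1) t k =
      (∑ j ∈ Finset.Icc (max (k - 1) 1) n, P n t j) +
        (if t = 0 then 0 else ∑ j ∈ Finset.Icc 1 (k - 2), P n (t - 1) j) := by
  obtain ⟨m, rfl⟩ := Nat.exists_eq_add_of_le' hn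
  obtain ⟨p, rfl⟩ : ∃ p : Fin (m + 2), k = p + 1 :=
    ⟨⟨k - 1, by omega⟩, (Nat.sub_add_cancel hk1).symm⟩
  have late_iff (σ : Perm (Fin (m + 1))) :
      p ≤ posOne σ ↔ posOne σ ∈ Icc (max (p + 1 - 1 : ℕ) 1) (m + 1) := by
    have := posOne_mem_Icc σ
    grind
  have early_iff (σ : Perm (Fin (m + 1))) : posOne σ < p ↔ posOne σ ∈ Icc 1 (p + 1 - 2 : ℕ) := by
    have := posOne_mem_Icc σ
    grind
  rw [P_eq_card_add_card, sum_P_eq_card t (by simp)]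
  simp only [late_iff, early_iff]
  cases t with
  | zero => simp
  | succ t =>
    rw [if_neg t.succ_ne_zero, sum_P_eq_card _ (by simp)]
    simp only [Nat.add_right_cancel_iff, Nat.add_sub_cancel]
end
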